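/- For every δ ∈ (0,1) and every integer k ≥ 3, there exists a constant C such that the following holds. If (p_n) is a sequence in [0,1] with p_n ≥ C·n^{−1/(k−1)} for all sufficiently large n, then the probability that the p_n-random subset [n]_{p_n} of {1,…,n} is (δ,k)-Szemerédi tends to 1 as n → ∞. -/

import Mathlib

attribute [local instance] Classical.propDecidable

/-- `A` is `(δ,k)`-Szemerédi: every subset `B ⊆ A` with `|B| ≥ δ|A|` contains a
`k`-term arithmetic progression. -/
def IsSzemeredi (δ : ℝ) (k : ℕ) (A : Finset ℕ) : Prop :=
  ∀ B ⊆ A, δ * (A.card : ℝ) ≤ (B.card : ℝ) →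
    ∃ a d : ℕ, 0 < a ∧ 0 < d ∧ ∀ i < k, a + i * d ∈ B

/-- The probability that the `p`-random subset of `{1, …, n}` satisfies `P`. -/
noncomputable def randomSubsetProb (n : ℕ) (p : ℝ) (P : Finset ℕ → Prop) : ℝ :=
  ∑ S ∈ (Finset.Icc 1 n).powerset,
    if P S then p ^ S.card * (1 - p) ^ (n - S.card) else 0

section A1
namespace SzRandom
open Combinatorics

/-- average of a real function over a finite type -/
noncomputable def av {X : Type*} [Finite X] (f : X → ℝ) : ℝ := (∑ᶠ x, f x) / (Nat.card X : ℝ)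

/-- 0/1 indicator of a proposition -/
noncomputable def ind (p : Prop) : ℝ := if p then 1 else 0

lemma ind_true {p : Prop} (h : p) : ind p = 1 := if_pos h
lemma ind_false {p : Prop} (h : ¬ p) : ind p = 0 := if_neg h
lemma ind_nonneg (p : Prop) : 0 ≤ ind p := by unfold ind; split_ifs <;> norm_num
lemma ind_le_one (p : Prop) : ind p ≤ 1 := by unfold ind; split_ifs <;> norm_num
lemma ind_mono {p q : Prop} (h : p → q) : ind p ≤ ind q := by
  by_cases hp : p
  · rw [ind_true hp, ind_true (h hp)]
  · rw [ind_false hp]; exact ind_nonneg q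

lemma av_eq {X : Type*} [Fintype X] (f : X → ℝ) : av f = (∑ x, f x) / (Fintype.card X : ℝ) := by
  unfold av
  rw [finsum_eq_sum_of_fintype, Nat.card_eq_fintype_card]

lemma av_mono {X : Type*} [Finite X] {f g : X → ℝ} (h : ∀ x, f x ≤ g x) : av f ≤ av g := by
  have := Fintype.ofFinite X
  rw [av_eq, av_eq]
  gcongr with x
  exact h x

lemma av_congr {X : Type*} [Finite X] {f g : X → ℝ} (h : ∀ x, f x = g x) : av f = av g := by
  rw [funext h]

lemma av_const {X : Type*} [Finite X] [Nonempty X] (c : ℝ) : av (fun _ : X => c) = c := by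
  have := Fintype.ofFinite X
  rw [av_eq]
  simp

lemma av_add {X : Type*} [Finite X] (f g : X → ℝ) : av (fun x => f x + g x) = av f + av g := by
  have := Fintype.ofFinite X
  rw [av_eq, av_eq, av_eq, Finset.sum_add_distrib, add_div]

lemma av_sub {X : Type*} [Finite X] (f g : X → ℝ) : av (fun x => f x - g x) = av f - av g := by
  have := Fintype.ofFinite X
  rw [av_eq, av_eq, av_eq, Finset.sum_sub_distrib, sub_div]

lemma av_mul_left {X : Type*} [Finite X] (c : ℝ) (f : X → ℝ) :
    av (fun x => c * f x) = c * av f := by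
  have := Fintype.ofFinite X
  rw [av_eq, av_eq, ← Finset.mul_sum, mul_div_assoc]

lemma av_mul_right {X : Type*} [Finite X] (c : ℝ) (f : X → ℝ) :
    av (fun x => f x * c) = av f * c := by
  rw [mul_comm, ← av_mul_left]
  exact av_congr fun x => mul_comm _ _

lemma av_sum {X Y : Type*} [Finite X] (s : Finset Y) (f : Y → X → ℝ) :
    av (fun x => ∑ y ∈ s, f y x) = ∑ y ∈ s, av (f y) := by
  have := Fintype.ofFinite X
  simp only [av_eq]
  rw [Finset.sum_comm, Finset.sum_div]

lemma av_nonneg {X : Type*} [Finite X] {f : X → ℝ} (h : ∀ x, 0 ≤ f x) : 0 ≤ av f := by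
  have := Fintype.ofFinite X
  rw [av_eq]
  exact div_nonneg (Finset.sum_nonneg fun x _ => h x) (by positivity)

lemma av_equiv {X Y : Type*} [Finite X] [Finite Y] (e : X ≃ Y) (f : Y → ℝ) :
    av (fun x => f (e x)) = av f := by
  have := Fintype.ofFinite X
  have := Fintype.ofFinite Y
  rw [av_eq, av_eq, Equiv.sum_comp e f, Fintype.card_congr e]

lemma av_prod {X Y : Type*} [Finite X] [Finite Y] (f : X × Y → ℝ) :
    av f = av (fun x => av (fun y => f (x, y))) := by
  have := Fintype.ofFinite X
  have := Fintype.ofFinite Y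
  simp only [av_eq]
  rw [← Finset.sum_div, Fintype.sum_prod_type, Fintype.card_prod, Nat.cast_mul, div_div, mul_comm]

lemma av_comm {X Y : Type*} [Finite X] [Finite Y] (f : X → Y → ℝ) :
    av (fun x => av (fun y => f x y)) = av (fun y => av (fun x => f x y)) := by
  have h1 := av_prod (fun q : X × Y => f q.1 q.2)
  have h2 := av_prod (fun q : Y × X => f q.2 q.1)
  rw [← h1, ← h2]
  exact av_equiv (Equiv.prodComm X Y) (fun q : Y × X => f q.2 q.1)

lemma av_elim {ι κ α : Type*} [Finite ι] [Finite κ] [Finite α] (f : (ι ⊕ κ → α) → ℝ) :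
    av f = av (fun u : ι → α => av (fun v : κ → α => f (Sum.elim u v))) := by
  have h := av_prod (fun q : (ι → α) × (κ → α) => f (Sum.elim q.1 q.2))
  rw [← h]
  exact (av_equiv (Equiv.sumArrowEquivProdArrow ι κ α).symm f).symm

lemma exists_av_le {X : Type*} [Finite X] [Nonempty X] (f : X → ℝ) : ∃ x, av f ≤ f x := by
  by_contra! h
  have := Fintype.ofFinite X
  have h1 : ∑ x, f x < ∑ _x : X, av f :=
    Finset.sum_lt_sum_of_nonempty Finset.univ_nonempty fun x _ => h x
  rw [av_eq] at h1
  simp only [Finset.sum_const, Finset.card_univ, nsmul_eq_mul] at h1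
  have : (Fintype.card X : ℝ) ≠ 0 := by positivity
  field_simp at h1
  exact lt_irrefl _ h1

lemma av_le_one {X : Type*} [Finite X] {f : X → ℝ} (h : ∀ x, f x ≤ 1) : av f ≤ 1 := by
  rcases isEmpty_or_nonempty X with hX | hX
  · have := Fintype.ofFinite X
    rw [av_eq]; simp
  · exact (av_mono h).trans (av_const 1).le

/-! ### subspaces -/

/-- composition of subspaces -/
def sComp {η ζ α ι : Type*} (U : Subspace η α ι) (V : Subspace ζ α η) : Subspace ζ α ι where
  idxFun i := (U.idxFun i).elim Sum.inl V.idxFun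
  proper e := by
    obtain ⟨j, hj⟩ := V.proper e
    obtain ⟨i, hi⟩ := U.proper j
    exact ⟨i, by simp [hi, hj]⟩

lemma sComp_apply {η ζ α ι : Type*} (U : Subspace η α ι) (V : Subspace ζ α η) (x : ζ → α) :
    sComp U V x = U (V x) := by
  funext i
  simp only [Subspace.apply_def, sComp]
  rcases h : U.idxFun i with a | j <;> simp [Subspace.apply_def]

/-- subspace times a point -/
def sFixR {η α ι κ : Type*} (U : Subspace η α ι) (y : κ → α) : Subspace η α (ι ⊕ κ) where
  idxFun := Sum.elim U.idxFun (fun j => Sum.inl (y j))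
  proper e := by
    obtain ⟨i, hi⟩ := U.proper e
    exact ⟨Sum.inl i, by simp [hi]⟩

lemma sFixR_apply {η α ι κ : Type*} (U : Subspace η α ι) (y : κ → α) (x : η → α) :
    sFixR U y x = Sum.elim (U x) y := by
  funext i
  rcases i with i | i <;> simp [Subspace.apply_def, sFixR]

/-- point times a subspace -/
def sFixL {η α ι κ : Type*} (y : ι → α) (U : Subspace η α κ) : Subspace η α (ι ⊕ κ) where
  idxFun := Sum.elim (fun j => Sum.inl (y j)) U.idxFun
  proper e := by
    obtain ⟨i, hi⟩ := U.proper e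
    exact ⟨Sum.inr i, by simp [hi]⟩

lemma sFixL_apply {η α ι κ : Type*} (y : ι → α) (U : Subspace η α κ) (x : η → α) :
    sFixL y U x = Sum.elim y (U x) := by
  funext i
  rcases i with i | i <;> simp [Subspace.apply_def, sFixL]

/-- identity subspace -/
def sId (ι α : Type*) : Subspace ι α ι := ⟨Sum.inr, fun i => ⟨i, rfl⟩⟩

lemma sId_apply {ι α : Type*} (x : ι → α) : sId ι α x = x := rfl

lemma sub_injective {η α ι : Type*} (U : Subspace η α ι) : Function.Injective (fun x => U x) := by
  intro x y h
  funext e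
  obtain ⟨i, hi⟩ := U.proper e
  have := congrFun h i
  simpa [Subspace.apply_def, hi] using this

instance {η α ι : Type*} [Finite η] [Finite α] [Finite ι] : Finite (Subspace η α ι) :=
  Finite.of_injective (fun U => U.idxFun) fun U V h => by cases U; cases V; simpa using h

instance {α ι : Type*} [Finite α] [Finite ι] : Finite (Line α ι) :=
  Finite.of_injective (fun U => U.idxFun) fun U V h => by cases U; cases V; simpa using h

/-- line-free sets -/
def LF {α ι : Type*} (A : Set (ι → α)) : Prop := ¬ ∃ l : Line α ι, ∀ a, l a ∈ A

lemma LF.pull {α ι η : Type*} {A : Set (ι → α)} (hA : LF A) (U : Subspace η α ι) :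
    LF {x | U x ∈ A} := by
  rintro ⟨l, hl⟩
  refine hA ⟨⟨fun i => (U.idxFun i).elim some l.idxFun, ?_⟩, ?_⟩
  · obtain ⟨j, hj⟩ := l.proper
    obtain ⟨i, hi⟩ := U.proper j
    exact ⟨i, by simp [hi, hj]⟩
  · intro a
    have hla : U (l a) ∈ A := hl a
    convert hla using 1
    funext i
    simp only [Subspace.apply_def, Line.apply_def]
    rcases h : U.idxFun i with b | j <;> simp

/-- density of a set -/
noncomputable def dens {X : Type*} [Finite X] (A : Set X) : ℝ := av (fun x => ind (x ∈ A))

lemma dens_nonneg {X : Type*} [Finite X] (A : Set X) : 0 ≤ dens A := av_nonneg fun _ => ind_nonneg _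
lemma dens_le_one {X : Type*} [Finite X] (A : Set X) : dens A ≤ 1 := av_le_one fun _ => ind_le_one _

/-- the density Hales-Jewett statement for an alphabet -/
def HasDHJ (α : Type) [Finite α] : Prop :=
  ∀ ε : ℝ, 0 < ε → ∃ (ι : Type) (_ : Finite ι), ∀ A : Set (ι → α), ε ≤ dens A → ¬ LF A

lemma events {α : Type} [Finite α] [Nonempty α] (h : HasDHJ α) (ε : ℝ) (hε : 0 < ε) :
    ∃ (ι : Type) (_ : Finite ι) (θ : ℝ), 0 < θ ∧ ∀ (Ω : Type) [Finite Ω] (D : (ι → α) → Set Ω),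
      ε ≤ av (fun t => dens (D t)) → ∃ l : Line α ι, θ ≤ dens {ω | ∀ a, ω ∈ D (l a)} := by
  obtain ⟨ι, hι, hA⟩ := h (ε / 2) (by positivity)
  have := Fintype.ofFinite (Line α ι)
  refine ⟨ι, hι, ε / 2 / (Fintype.card (Line α ι) + 1), by positivity, ?_⟩
  intro Ω _ D hD
  by_contra! hcon
  have hpt : ∀ ω, dens {t | ω ∈ D t} ≤ ε / 2 + ∑ l : Line α ι, ind (∀ a, ω ∈ D (l a)) := by
    intro ω
    by_cases hd : ε / 2 ≤ dens {t | ω ∈ D t}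
    · have := hA _ hd
      unfold LF at this
      push Not at this
      obtain ⟨l, hl⟩ := this
      have h1 : ind (∀ a, ω ∈ D (l a)) ≤ ∑ l : Line α ι, ind (∀ a, ω ∈ D (l a)) :=
        Finset.single_le_sum (f := fun l : Line α ι => ind (∀ a, ω ∈ D (l a)))
          (fun l _ => ind_nonneg _) (Finset.mem_univ l)
      rw [ind_true (p := ∀ a, ω ∈ D (l a)) hl] at h1
      linarith [dens_le_one {t | ω ∈ D t}]
    · push Not at hd
      have : 0 ≤ ∑ l : Line α ι, ind (∀ a, ω ∈ D (l a)) := Finset.sum_nonneg fun l _ => ind_nonneg _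
      linarith
  rcases isEmpty_or_nonempty Ω with hΩ | hΩ
  · have : av (fun t => dens (D t)) = 0 := by
      have : ∀ t, dens (D t) = 0 := by
        intro t
        have := Fintype.ofFinite Ω
        unfold dens
        rw [av_eq]; simp
      simp only [this]
      exact av_const 0
    linarith
  have h2 : av (fun t => dens (D t)) ≤ ε / 2 + ∑ l : Line α ι, dens {ω | ∀ a, ω ∈ D (l a)} := by
    have : av (fun t => dens (D t)) = av (fun ω => dens {t | ω ∈ D t}) := av_comm _
    rw [this]
    refine (av_mono hpt).trans ?_
    rw [av_add, av_const, av_sum]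
    rfl
  have h3 : ∑ l : Line α ι, dens {ω | ∀ a, ω ∈ D (l a)} ≤
      ∑ l : Line α ι, ε / 2 / (Fintype.card (Line α ι) + 1) :=
    Finset.sum_le_sum fun l _ => (hcon l).le
  have h4 : ∑ l : Line α ι, ε / 2 / ((Fintype.card (Line α ι) : ℝ) + 1) < ε / 2 := by
    rw [Finset.sum_const, Finset.card_univ, nsmul_eq_mul, mul_div_assoc', div_lt_iff₀ (by positivity)]
    nlinarith
  linarith

lemma exists_of_dens_pos {X : Type*} [Finite X] {A : Set X} (h : 0 < dens A) : ∃ x, x ∈ A := by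
  by_contra! hc
  have : dens A ≤ 0 := by
    unfold dens
    rcases isEmpty_or_nonempty X with hX | hX
    · have := Fintype.ofFinite X
      rw [av_eq]; simp
    · exact (av_mono (g := fun _ => 0) fun x => (ind_false (hc x)).le).trans (av_const 0).le
  linarith

lemma mdhj {α : Type} [Finite α] [Nonempty α] (h : HasDHJ α) (η : Type) [Finite η] :
    ∀ ε : ℝ, 0 < ε → ∃ (κ : Type) (_ : Finite κ), ∀ A : Set (κ → α), ε ≤ dens A →
      ∃ U : Subspace η α κ, ∀ x, U x ∈ A := by
  induction η using Finite.induction_empty_option with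
  | of_equiv e ih =>
    intro ε hε
    obtain ⟨κ, hκ, H⟩ := ih ε hε
    refine ⟨κ, hκ, fun A hA => ?_⟩
    obtain ⟨U, hU⟩ := H A hA
    refine ⟨U.reindex e (Equiv.refl _) (Equiv.refl _), fun x => ?_⟩
    convert hU (x ∘ e) using 1
    funext i
    simp
  | h_empty =>
    intro ε hε
    refine ⟨Empty, inferInstance, fun A hA => ?_⟩
    obtain ⟨x, hx⟩ := exists_of_dens_pos (hε.trans_le hA)
    exact ⟨⟨fun i => i.elim, fun e => e.elim⟩, fun y => by convert hx⟩
  | h_option ih =>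
    rename_i η _
    intro ε hε
    obtain ⟨ι, hι, θ, hθ, hE⟩ := events h ε hε
    obtain ⟨κ, hκ, H⟩ := ih θ hθ
    refine ⟨ι ⊕ κ, inferInstance, fun A hA => ?_⟩
    obtain ⟨l, hl⟩ := hE (κ → α) (fun t => {y | Sum.elim t y ∈ A}) (by
      refine hA.trans (le_of_eq ?_)
      unfold dens
      rw [av_elim]
      rfl)
    obtain ⟨U, hU⟩ := H _ hl
    refine ⟨⟨Sum.elim (fun i => (l.idxFun i).elim (Sum.inr none) Sum.inl)
      (fun j => (U.idxFun j).map id some), ?_⟩, ?_⟩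
    · rintro (_ | e)
      · obtain ⟨i, hi⟩ := l.proper
        exact ⟨Sum.inl i, by simp [hi]⟩
      · obtain ⟨i, hi⟩ := U.proper e
        exact ⟨Sum.inr i, by simp [hi]⟩
    · intro x
      have := hU (fun e => x (some e)) (x none)
      simp only [Set.mem_ofPred_eq] at this
      convert this using 1
      funext i
      rcases i with i | i
      · simp only [Subspace.apply_def, Sum.elim_inl, Line.apply_def]
        rcases l.idxFun i with _ | b <;> simp
      · simp only [Subspace.apply_def, Sum.elim_inr]
        rcases U.idxFun i with b | e <;> simp

lemma mdhj_large {α : Type} [Finite α] [Nonempty α] (h : HasDHJ α) (η : Type) [Finite η]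
    (ε : ℝ) (hε : 0 < ε) : ∃ N : ℕ, ∀ (ι : Type) [Finite ι], N ≤ Nat.card ι →
      ∀ A : Set (ι → α), ε ≤ dens A → ∃ U : Subspace η α ι, ∀ x, U x ∈ A := by
  obtain ⟨κ, hκ, H⟩ := mdhj h η ε hε
  refine ⟨Nat.card κ, fun ι _ hι A hA => ?_⟩
  have := Fintype.ofFinite ι
  have := Fintype.ofFinite κ
  rw [Nat.card_eq_fintype_card, Nat.card_eq_fintype_card] at hι
  obtain ⟨f⟩ := Function.Embedding.nonempty_of_card_le hι
  let e : κ ⊕ ↥((Set.range f)ᶜ) ≃ ι :=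
    (Equiv.sumCongr (Equiv.ofInjective f f.injective) (Equiv.refl _)).trans
      (Equiv.Set.sumCompl (Set.range f))
  have h1 : dens A = av (fun v : ↥((Set.range f)ᶜ) → α => dens {u : κ → α |
      (fun i => Sum.elim u v (e.symm i)) ∈ A}) := by
    unfold dens
    rw [← av_equiv (Equiv.arrowCongr e (Equiv.refl α)), av_elim, av_comm]
    rfl
  obtain ⟨v, hv⟩ := exists_av_le (fun v : ↥((Set.range f)ᶜ) → α => dens {u : κ → α |
      (fun i => Sum.elim u v (e.symm i)) ∈ A})
  obtain ⟨U, hU⟩ := H _ ((hA.trans h1.le).trans hv)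
  refine ⟨(sFixR U v).reindex (Equiv.refl _) (Equiv.refl _) e, fun x => ?_⟩
  have hUx : (fun i => Sum.elim (U x) v (e.symm i)) ∈ A := hU x
  convert hUx using 1
  funext i
  simp [sFixR_apply]

end SzRandom

end A1

section A2
namespace SzRandom
open Combinatorics

/-- substitute the letter `a` for the extra letter -/
def pj {α ι : Type*} (a : α) (x : ι → Option α) : ι → α := fun i => (x i).getD a

lemma pj_elim {α ι κ : Type*} (a : α) (u : ι → Option α) (z : κ → Option α) :
    pj a (Sum.elim u z) = Sum.elim (pj a u) (pj a z) := by
  funext i; rcases i with i | i <;> rfl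

lemma pj_some {α ι : Type*} (a : α) (x : ι → α) : pj a (fun i => some (x i)) = x := rfl

lemma pj_sub {α ι η : Type*} (a : α) (U : Subspace η (Option α) ι) (x : η → Option α) :
    pj a (U x) = pj a (U (fun i => some (pj a x i))) := by
  funext i
  simp only [pj, Subspace.apply_def]
  rcases U.idxFun i with b | e <;> simp

/-- extend a word on `S` by the extra letter -/
noncomputable def extS {α B : Type} (q : Σ S : Set B, (S → α)) : B → Option α :=
  fun i => if h : i ∈ q.1 then some (q.2 ⟨i, h⟩) else none

lemma extS_bij {α B : Type} : Function.Bijective (extS (α := α) (B := B)) := by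
  constructor
  · rintro ⟨S, y⟩ ⟨S', y'⟩ h
    have hS : S = S' := by
      ext i
      have := congrFun h i
      by_cases h1 : i ∈ S <;> by_cases h2 : i ∈ S' <;> simp_all [extS]
    subst hS
    congr
    funext ⟨i, hi⟩
    have := congrFun h i
    simpa [extS, hi] using this
  · intro x
    refine ⟨⟨{i | (x i).isSome}, fun i => (x i.1).get i.2⟩, ?_⟩
    funext i
    unfold extS
    by_cases h : (x i).isSome
    · simp [h]
    · simp only [Option.not_isSome_iff_eq_none] at h
      simp [h]

lemma insens_sub {α : Type} [Finite α] [Nonempty α] (h : HasDHJ α) (a : α) (η : Type) [Finite η]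
    (ε : ℝ) (hε : 0 < ε) : ∃ (B : Type) (_ : Finite B), ∀ E : Set (B → α),
      ε ≤ dens {x : B → Option α | pj a x ∈ E} →
        ∃ U : Subspace η (Option α) B, ∀ x, pj a (U x) ∈ E := by
  obtain ⟨N, hN⟩ := mdhj_large h η (ε / 2) (by positivity)
  have := Fintype.ofFinite α
  set k : ℝ := (Fintype.card α : ℝ) with hk
  have hk0 : 0 < k := by rw [hk]; exact_mod_cast Fintype.card_pos
  obtain ⟨M, hM⟩ := exists_pow_lt_of_lt_one (show 0 < ε / 2 / 2 ^ N by positivity)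
    (show (1 + k / 2) / (1 + k) < 1 by rw [div_lt_one (by positivity)]; linarith)
  refine ⟨Fin M, inferInstance, fun E hE => ?_⟩
  by_contra! hcon
  let hh : Option α → ℝ := fun b => if b.isSome then 1 / 2 else 1
  have key : ∀ S : Set (Fin M), ∑ y : S → α, ind (pj a (extS ⟨S, y⟩) ∈ E) ≤
      ∑ y : S → α, (ε / 2 + 2 ^ N * ∏ i, hh (extS ⟨S, y⟩ i)) := by
    intro S
    have hprod : ∀ y : S → α, ∏ i, hh (extS ⟨S, y⟩ i) = (1 / 2) ^ (Nat.card S) := by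
      intro y
      have : ∀ i, hh (extS ⟨S, y⟩ i) = if i ∈ S then 1 / 2 else 1 := by
        intro i
        by_cases hi : i ∈ S <;> simp [hh, extS, hi]
      simp only [this]
      rw [Finset.prod_ite]
      simp [Nat.card_eq_fintype_card, Fintype.card_subtype]
    by_cases hS : N ≤ Nat.card S
    · have hd : dens {y : S → α | pj a (extS ⟨S, y⟩) ∈ E} < ε / 2 := by
        by_contra! hd
        obtain ⟨U', hU'⟩ := hN S hS _ hd
        let U : Subspace η (Option α) (Fin M) :=
          ⟨fun i => if h : i ∈ S then (U'.idxFun ⟨i, h⟩).map some id else Sum.inl none, fun e => by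
            obtain ⟨i, hi⟩ := U'.proper e
            exact ⟨i.1, by simp [hi]⟩⟩
        obtain ⟨x, hx⟩ := hcon U
        apply hx
        have hUx : pj a (extS ⟨S, U' (pj a x)⟩) ∈ E := hU' (pj a x)
        convert hUx using 1
        funext i
        simp only [pj, Subspace.apply_def, U, extS]
        by_cases hi : i ∈ S
        · simp only [hi, dif_pos]
          rcases U'.idxFun ⟨i, hi⟩ with b | e <;> simp [pj]
        · simp [hi]
      unfold dens at hd
      rw [av_eq, div_lt_iff₀ (by positivity)] at hd
      have h2 : ∑ y : S → α, (ε / 2) ≤ ∑ y : S → α, (ε / 2 + 2 ^ N * ∏ i, hh (extS ⟨S, y⟩ i)) := by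
        apply Finset.sum_le_sum
        intro y _
        rw [hprod]
        have : (0 : ℝ) ≤ 2 ^ N * (1 / 2) ^ (Nat.card S) := by positivity
        linarith
      refine hd.le.trans (le_trans (le_of_eq ?_) h2)
      simp [mul_comm]
    · apply Finset.sum_le_sum
      intro y _
      rw [hprod]
      have h1 : (1 : ℝ) ≤ 2 ^ N * (1 / 2) ^ (Nat.card S) := by
        rw [one_div, inv_pow, ← div_eq_mul_inv, one_le_div (by positivity)]
        exact pow_le_pow_right₀ (by norm_num) (by omega)
      linarith [ind_le_one (pj a (extS ⟨S, y⟩) ∈ E)]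
  have tot : ∑ x : Fin M → Option α, ind (pj a x ∈ E) ≤
      ∑ x : Fin M → Option α, (ε / 2 + 2 ^ N * ∏ i, hh (x i)) := by
    have e := Equiv.ofBijective (extS (α := α) (B := Fin M)) extS_bij
    rw [← Function.Bijective.sum_comp (extS_bij (α := α) (B := Fin M))
      (fun x => ind (pj a x ∈ E)), ← Function.Bijective.sum_comp (extS_bij (α := α) (B := Fin M))
      (fun x => (ε / 2 + 2 ^ N * ∏ i, hh (x i))), Fintype.sum_sigma, Fintype.sum_sigma]
    exact Finset.sum_le_sum fun S _ => key S
  have hpow : ∑ x : Fin M → Option α, ∏ i, hh (x i) = (1 + k / 2) ^ M := by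
    rw [← Fintype.sum_pow]
    congr 1
    rw [Fintype.sum_option]
    simp [hh, hk]
    ring
  rw [Finset.sum_add_distrib, ← Finset.mul_sum, hpow] at tot
  unfold dens at hE
  rw [av_eq, le_div_iff₀ (by positivity)] at hE
  have hcard : (Fintype.card (Fin M → Option α) : ℝ) = (1 + k) ^ M := by
    simp [hk, add_comm]
  rw [Finset.sum_const, Finset.card_univ, nsmul_eq_mul] at tot
  rw [hcard] at tot hE
  rw [div_pow, div_lt_div_iff₀ (by positivity) (by positivity)] at hM
  have hE' : ε * (1 + k) ^ M ≤ ∑ x : Fin M → Option α, ind (pj a x ∈ E) := hE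
  nlinarith

lemma av_range {X Y : Type*} [Finite X] [Finite Y] [Nonempty X] (f : X → Y)
    (hf : Function.Injective f) (φ : Y → ℝ) :
    av (fun y => ind (∃ x, f x = y) * φ y) =
      ((Nat.card X : ℝ) / Nat.card Y) * av (fun x => φ (f x)) := by
  have := Fintype.ofFinite X
  have := Fintype.ofFinite Y
  rw [av_eq, av_eq, Nat.card_eq_fintype_card, Nat.card_eq_fintype_card]
  have h1 : ∑ y, ind (∃ x, f x = y) * φ y = ∑ x, φ (f x) := by
    rw [← Finset.sum_image (f := φ) (s := Finset.univ) (g := f) (by intro a _ b _ h; exact hf h)]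
    rw [← Finset.sum_subset (Finset.subset_univ (Finset.univ.image f))]
    · apply Finset.sum_congr rfl
      intro y hy
      simp only [Finset.mem_image, Finset.mem_univ, true_and] at hy
      rw [ind_true hy, one_mul]
    · intro y _ hy
      simp only [Finset.mem_image, Finset.mem_univ, true_and] at hy
      rw [ind_false hy, zero_mul]
  rw [h1]
  have : (Fintype.card X : ℝ) ≠ 0 := by
    have := Fintype.card_pos (α := X)
    positivity
  field_simp

lemma peel_iter {α : Type} [Finite α] [Nonempty α] (h : HasDHJ α) (a : α) (η : Type) [Finite η]
    (ε : ℝ) (hε : 0 < ε) : ∃ c : ℝ, 0 < c ∧ c ≤ 1 ∧ ∀ T : ℕ, ∃ (ι : Type) (_ : Finite ι),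
      ∀ (E : Set (ι → α)) (g : (ι → Option α) → ℝ), (∀ x, g x ≤ 1) →
      (∀ U : Subspace η (Option α) ι, av (fun x => g (U x)) ≤ ε) →
      av (fun x => g x * ind (pj a x ∈ E)) ≤
        ε * dens {x | pj a x ∈ E} + ε + (1 - c) ^ T * dens {x | pj a x ∈ E} := by
  obtain ⟨B, hB, hS⟩ := insens_sub h a η (ε / 2) (by positivity)
  have := Fintype.ofFinite (Subspace η (Option α) B)
  set K : ℝ := (Fintype.card (Subspace η (Option α) B) : ℝ) with hK
  set b : ℝ := (Nat.card (B → Option α) : ℝ) with hb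
  have hb1 : 1 ≤ b := by
    rw [hb]; exact_mod_cast Nat.card_pos
  set c0 : ℝ := min (ε / 2 / (K + 1)) 1 with hc0
  have hc00 : 0 < c0 := by rw [hc0]; positivity
  refine ⟨c0 / b, by positivity, ?_, ?_⟩
  · rw [div_le_one (by positivity)]; exact (min_le_right _ _).trans hb1
  have hc1 : c0 / b ≤ 1 := by
    rw [div_le_one (by positivity)]; exact (min_le_right _ _).trans hb1
  have hc : 0 < c0 / b := by positivity
  set c := c0 / b with hcdef
  intro T
  induction T with
  | zero =>
    refine ⟨Empty, inferInstance, fun E g hg _ => ?_⟩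
    have h1 : av (fun x => g x * ind (pj a x ∈ E)) ≤ dens {x | pj a x ∈ E} :=
      av_mono fun x => by
        have := ind_nonneg (pj a x ∈ E)
        have h2 := hg x
        show g x * ind (pj a x ∈ E) ≤ ind (pj a x ∈ E)
        nlinarith
    have h0 := dens_nonneg {x | pj a x ∈ E}
    rw [pow_zero, one_mul]
    nlinarith
  | succ T ih =>
    obtain ⟨ι, hι, H⟩ := ih
    refine ⟨B ⊕ ι, inferInstance, fun E g hg hU => ?_⟩
    have hd0 := dens_nonneg {x | pj a x ∈ E}
    by_cases hsmall : dens {x | pj a x ∈ E} ≤ ε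
    · have h1 : av (fun x => g x * ind (pj a x ∈ E)) ≤ dens {x | pj a x ∈ E} :=
        av_mono fun x => by
          have := ind_nonneg (pj a x ∈ E)
          have h2 := hg x
          show g x * ind (pj a x ∈ E) ≤ ind (pj a x ∈ E)
          nlinarith
      have : 0 ≤ (1 - c) ^ (T + 1) * dens {x | pj a x ∈ E} :=
        mul_nonneg (pow_nonneg (by linarith) _) hd0
      have := mul_nonneg hε.le hd0
      linarith
    push Not at hsmall
    -- popular subspace
    have hpt : ∀ z : ι → Option α, dens {u : B → Option α | pj a (Sum.elim u z) ∈ E} ≤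
        ε / 2 + ∑ U : Subspace η (Option α) B, ind (∀ x, pj a (Sum.elim (U x) z) ∈ E) := by
      intro z
      by_cases hd : ε / 2 ≤ dens {u : B → Option α | pj a (Sum.elim u z) ∈ E}
      · obtain ⟨U, hU⟩ := hS {u' | Sum.elim u' (pj a z) ∈ E} (by
          simp only [pj_elim] at hd; exact hd)
        have h1 : ind (∀ x, pj a (Sum.elim (U x) z) ∈ E) ≤
            ∑ U : Subspace η (Option α) B, ind (∀ x, pj a (Sum.elim (U x) z) ∈ E) :=
          Finset.single_le_sum
            (f := fun U : Subspace η (Option α) B => ind (∀ x, pj a (Sum.elim (U x) z) ∈ E))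
            (fun l _ => ind_nonneg _) (Finset.mem_univ U)
        rw [ind_true (p := ∀ x, pj a (Sum.elim (U x) z) ∈ E)
          (fun x => by rw [pj_elim]; exact hU x)] at h1
        linarith [dens_le_one {u : B → Option α | pj a (Sum.elim u z) ∈ E}]
      · push Not at hd
        have : 0 ≤ ∑ U : Subspace η (Option α) B, ind (∀ x, pj a (Sum.elim (U x) z) ∈ E) :=
          Finset.sum_nonneg fun l _ => ind_nonneg _
        linarith
    have hsum : dens {x | pj a x ∈ E} ≤ ε / 2 + ∑ U : Subspace η (Option α) B,
        dens {z : ι → Option α | ∀ x, pj a (Sum.elim (U x) z) ∈ E} := by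
      have h1 : dens {x | pj a x ∈ E} = av (fun z : ι → Option α =>
          dens {u : B → Option α | pj a (Sum.elim u z) ∈ E}) := by
        unfold dens
        rw [av_elim, av_comm]
        rfl
      rw [h1]
      refine (av_mono hpt).trans ?_
      rw [av_add, av_const, av_sum]
      rfl
    obtain ⟨U, hUpop⟩ : ∃ U : Subspace η (Option α) B,
        c0 ≤ dens {z : ι → Option α | ∀ x, pj a (Sum.elim (U x) z) ∈ E} := by
      by_contra! hcon
      have h3 : ∑ U : Subspace η (Option α) B,
          dens {z : ι → Option α | ∀ x, pj a (Sum.elim (U x) z) ∈ E} ≤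
          ∑ _U : Subspace η (Option α) B, ε / 2 / (K + 1) :=
        Finset.sum_le_sum fun l _ => (hcon l).le.trans (min_le_left _ _)
      have h4 : ∑ _U : Subspace η (Option α) B, ε / 2 / (K + 1) < ε / 2 := by
        rw [Finset.sum_const, Finset.card_univ, nsmul_eq_mul, mul_div_assoc',
          div_lt_iff₀ (by positivity)]
        nlinarith
      linarith
    set Z : Set (ι → Option α) := {z | ∀ x, pj a (Sum.elim (U x) z) ∈ E} with hZ
    set ρ : ℝ := (Nat.card (η → Option α) : ℝ) / Nat.card (B → Option α) with hρ
    have hρ1 : 1 / b ≤ ρ := by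
      rw [hρ, hb]
      gcongr
      exact_mod_cast Nat.card_pos
    let E' : (B → Option α) → Set (ι → α) := fun u => {z' | Sum.elim (pj a u) z' ∈ E ∧
      ¬ ((∃ x, U x = u) ∧ ∀ x, Sum.elim (pj a (U x)) z' ∈ E)}
    have hid : ∀ u z, ind (pj a (Sum.elim u z) ∈ E) =
        ind (∃ x, U x = u) * ind (z ∈ Z) + ind (pj a z ∈ E' u) := by
      intro u z
      have hZ' : z ∈ Z ↔ ∀ x, Sum.elim (pj a (U x)) (pj a z) ∈ E := by
        rw [hZ]
        simp only [Set.mem_ofPred_eq, pj_elim]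
      have hE' : pj a z ∈ E' u ↔ (Sum.elim (pj a u) (pj a z) ∈ E ∧
          ¬ ((∃ x, U x = u) ∧ ∀ x, Sum.elim (pj a (U x)) (pj a z) ∈ E)) := Iff.rfl
      rw [← hZ'] at hE'
      rw [pj_elim]
      by_cases h1 : ∃ x, U x = u
      · by_cases h2 : z ∈ Z
        · have h3 : Sum.elim (pj a u) (pj a z) ∈ E := by
            obtain ⟨x, rfl⟩ := h1
            exact hZ'.1 h2 x
          rw [ind_true h1, ind_true h2, ind_true h3, ind_false (by rw [hE']; tauto)]
          norm_num
        · rw [ind_false h2, mul_zero, zero_add]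
          congr 1
          rw [hE']
          simp [h2]
      · rw [ind_false h1, zero_mul, zero_add]
        congr 1
        rw [hE']
        simp only [h1, false_and, not_false_eq_true, and_true]
    have hd' : av (fun u => dens {z | pj a z ∈ E' u}) = dens {x | pj a x ∈ E} - ρ * dens Z := by
      have h1 : dens {x | pj a x ∈ E} = av (fun u : B → Option α => av (fun z : ι → Option α =>
          ind (∃ x, U x = u) * ind (z ∈ Z) + ind (pj a z ∈ E' u))) := by
        unfold dens
        rw [av_elim]
        exact av_congr fun u => av_congr fun z => hid u z
      have h2 := av_range (fun x => U x) (sub_injective U) (fun _ => dens Z)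
      rw [av_const] at h2
      rw [h1]
      simp only [av_add, av_mul_left]
      have h3 : av (fun u => ind (∃ x, U x = u) * av (fun z => ind (z ∈ Z))) = ρ * dens Z := h2
      rw [h3]
      simp only [dens, Set.mem_ofPred_eq]
      ring
    have hmain : av (fun x => g x * ind (pj a x ∈ E)) =
        av (fun z : ι → Option α => ind (z ∈ Z) * (ρ * av (fun x => g (Sum.elim (U x) z)))) +
        av (fun u : B → Option α => av (fun z : ι → Option α =>
          g (Sum.elim u z) * ind (pj a z ∈ E' u))) := by
      rw [av_elim]
      simp only [hid, mul_add, av_add]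
      congr 1
      rw [av_comm]
      apply av_congr
      intro z
      rw [← av_range (fun x => U x) (sub_injective U) (fun u => g (Sum.elim u z)), ← av_mul_left]
      apply av_congr
      intro u
      ring
    have hfirst : av (fun z : ι → Option α => ind (z ∈ Z) *
        (ρ * av (fun x => g (Sum.elim (U x) z)))) ≤ (ρ * ε) * dens Z := by
      rw [mul_comm]
      unfold dens
      rw [← av_mul_right]
      apply av_mono
      intro z
      have h1 := hU (sFixR U z)
      simp only [sFixR_apply] at h1
      have : 0 ≤ ρ := by positivity
      have h2 := ind_nonneg (z ∈ Z)
      gcongr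
    have hsecond : av (fun u : B → Option α => av (fun z : ι → Option α =>
          g (Sum.elim u z) * ind (pj a z ∈ E' u))) ≤
        ε * (dens {x | pj a x ∈ E} - ρ * dens Z) + ε +
          (1 - c) ^ T * (dens {x | pj a x ∈ E} - ρ * dens Z) := by
      rw [← hd']
      have h1 : ∀ u : B → Option α, av (fun z : ι → Option α =>
          g (Sum.elim u z) * ind (pj a z ∈ E' u)) ≤ ε * dens {z | pj a z ∈ E' u} + ε +
          (1 - c) ^ T * dens {z | pj a z ∈ E' u} := by
        intro u
        apply H (E' u) (fun z => g (Sum.elim u z)) (fun z => hg _)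
        intro V
        have := hU (sFixL u V)
        simpa only [sFixL_apply] using this
      refine (av_mono h1).trans (le_of_eq ?_)
      rw [av_add, av_add, av_mul_left, av_mul_left, av_const]
    have hrem : c ≤ ρ * dens Z := by
      have h1 : c = 1 / b * c0 := by rw [hcdef]; ring
      rw [h1]
      gcongr
    have hd1 := dens_le_one {x | pj a x ∈ E}
    rw [hmain]
    have hp : 0 ≤ (1 - c) ^ T := pow_nonneg (by linarith) _
    have h5 : (1 - c) ^ T * (dens {x | pj a x ∈ E} - ρ * dens Z) ≤
        (1 - c) ^ (T + 1) * dens {x | pj a x ∈ E} := by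
      rw [pow_succ, mul_assoc]
      apply mul_le_mul_of_nonneg_left _ hp
      nlinarith
    nlinarith

lemma peel {α : Type} [Finite α] [Nonempty α] (h : HasDHJ α) (a : α) (η : Type) [Finite η]
    (ε : ℝ) (hε : 0 < ε) : ∃ (ι : Type) (_ : Finite ι),
      ∀ (E : Set (ι → α)) (g : (ι → Option α) → ℝ), (∀ x, g x ≤ 1) →
      (∀ U : Subspace η (Option α) ι, av (fun x => g (U x)) ≤ ε) →
      av (fun x => g x * ind (pj a x ∈ E)) ≤ 3 * ε := by
  obtain ⟨c, hc0, hc1, H⟩ := peel_iter h a η ε hε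
  obtain ⟨T, hT⟩ := exists_pow_lt_of_lt_one hε (show 1 - c < 1 by linarith)
  obtain ⟨ι, hι, H⟩ := H T
  refine ⟨ι, hι, fun E g hg hU => (H E g hg hU).trans ?_⟩
  have h0 := dens_nonneg {x | pj a x ∈ E}
  have h1 := dens_le_one {x | pj a x ∈ E}
  have hp : 0 ≤ (1 - c) ^ T := pow_nonneg (by linarith) _
  nlinarith

lemma chain {α : Type} [Finite α] [Nonempty α] (h : HasDHJ α) (s : Finset α) :
    ∀ (η : Type) [Finite η] (ε : ℝ), 0 < ε → ∃ (ι : Type) (_ : Finite ι),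
      ∀ (E : α → Set (ι → α)) (g : (ι → Option α) → ℝ), (∀ x, g x ≤ 1) →
      (∀ U : Subspace η (Option α) ι, av (fun x => g (U x)) ≤ ε) →
      av (fun x => g x * ∏ a ∈ s, ind (pj a x ∈ E a)) ≤ 3 ^ s.card * ε := by
  induction s using Finset.induction_on with
  | empty =>
    intro η _ ε hε
    refine ⟨η, inferInstance, fun E g hg hU => ?_⟩
    have := hU (sId η _)
    simpa [sId_apply] using this
  | insert a s ha ih =>
    intro η _ ε hε
    obtain ⟨ι1, hι1, H1⟩ := peel h a η ε hε
    obtain ⟨ι, hι, H⟩ := ih ι1 (3 * ε) (by positivity)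
    refine ⟨ι, hι, fun E g hg hU => ?_⟩
    have h1 := H E (fun x => g x * ind (pj a x ∈ E a)) (fun x => by
      have := ind_nonneg (pj a x ∈ E a)
      have := ind_le_one (pj a x ∈ E a)
      have := hg x
      show g x * ind (pj a x ∈ E a) ≤ 1
      nlinarith) (fun U => by
      have h2 := H1 {t | pj a (U (fun i => some (t i))) ∈ E a} (fun x => g (U x))
        (fun x => hg _) (fun V => by
          have := hU (sComp U V)
          simpa only [sComp_apply] using this)
      refine le_trans (le_of_eq ?_) h2
      apply av_congr
      intro x
      rw [pj_sub]
      rfl)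
    rw [Finset.card_insert_of_notMem ha]
    refine le_trans (le_of_eq ?_) (h1.trans (le_of_eq (by ring)))
    apply av_congr
    intro x
    rw [Finset.prod_insert ha]
    ring

end SzRandom

end A2

section A3
namespace SzRandom
open Combinatorics

/-- extension of a subspace to the larger alphabet -/
def bx {α η ι : Type} (Y : Subspace η α ι) : Subspace η (Option α) ι where
  idxFun i := (Y.idxFun i).map some id
  proper e := by
    obtain ⟨i, hi⟩ := Y.proper e
    exact ⟨i, by simp [hi]⟩

lemma bx_apply {α η ι : Type} (Y : Subspace η α ι) (x : η → Option α) (i : ι) :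
    bx Y x i = (Y.idxFun i).elim some x := by
  simp only [bx, Subspace.apply_def]
  rcases Y.idxFun i with b | e <;> simp

lemma pj_bx {α η ι : Type} (Y : Subspace η α ι) (a : α) (x : η → Option α) :
    pj a (bx Y x) = Y (pj a x) := by
  funext i
  simp only [pj, bx, Subspace.apply_def]
  rcases Y.idxFun i with b | e <;> simp [pj]

lemma bx_some {α η ι : Type} (Y : Subspace η α ι) (x : η → α) :
    bx Y (fun i => some (x i)) = fun i => some (Y x i) := by
  funext i
  simp only [bx, Subspace.apply_def]
  rcases Y.idxFun i with b | e <;> simp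

lemma stab {α : Type} [Finite α] [Nonempty α] (κ : Type) [Finite κ] (N : Type) [Finite N] :
    ∀ (C : Type) [Finite C], ∃ (M : Type) (_ : Finite M), ∀ f : (M → Option α) → C,
      ∃ Y : Subspace (N ⊕ κ) α M, ∀ s : N → Option α, (∃ i, s i = none) →
        ∀ v v', f (bx Y (Sum.elim s v)) = f (bx Y (Sum.elim s v')) := by
  induction N using Finite.induction_empty_option with
  | of_equiv e ih =>
    intro C _
    obtain ⟨M, hM, H⟩ := ih C
    refine ⟨M, hM, fun f => ?_⟩
    obtain ⟨Y, hY⟩ := H f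
    refine ⟨Y.reindex (Equiv.sumCongr e (Equiv.refl _)) (Equiv.refl _) (Equiv.refl _), ?_⟩
    rintro s ⟨i, hi⟩ v v'
    have h1 : ∀ w, bx (Y.reindex (Equiv.sumCongr e (Equiv.refl _)) (Equiv.refl _) (Equiv.refl _))
        (Sum.elim s w) = bx Y (Sum.elim (s ∘ e) w) := by
      intro w
      funext j
      simp only [bx, Subspace.apply_def, Subspace.reindex]
      simp only [Equiv.refl_symm, Equiv.refl_apply]
      rcases Y.idxFun j with b | (n | k) <;> simp
    rw [h1, h1]
    exact hY _ ⟨e.symm i, by simpa using hi⟩ v v'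
  | h_empty =>
    intro C _
    refine ⟨PEmpty ⊕ κ, inferInstance, fun f => ⟨sId _ _, ?_⟩⟩
    rintro s ⟨i, hi⟩
    exact i.elim
  | h_option ih =>
    rename_i N _
    intro C _
    obtain ⟨M1, hM1, H⟩ := ih (α → C)
    obtain ⟨M', hM', HV⟩ := Subspace.exists_mono_in_high_dimension (Option α) C M1
    have := hM'
    refine ⟨Option M', inferInstance, fun f => ?_⟩
    obtain ⟨V, c, hV⟩ := HV (fun x => f (fun i => i.elim none x))
    let Va : α → (M1 → Option α) → (M' → Option α) := fun a x i =>
      (V.idxFun i).elim (fun b => some (b.getD a)) x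
    obtain ⟨Y', hY'⟩ := H (fun x a => f (fun i => i.elim (some a) (Va a x)))
    let j1 : α ⊕ (N ⊕ κ) → α ⊕ (Option N ⊕ κ) := Sum.map id (Sum.map some id)
    refine ⟨⟨fun i => i.elim (Sum.inr (Sum.inl none)) fun i => (V.idxFun i).elim
      (fun b => b.elim (Sum.inr (Sum.inl none)) Sum.inl) (fun m => j1 (Y'.idxFun m)), ?_⟩, ?_⟩
    · rintro ((_ | n) | k)
      · exact ⟨none, rfl⟩
      · obtain ⟨m, hm⟩ := Y'.proper (Sum.inl n)
        obtain ⟨i, hi⟩ := V.proper m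
        exact ⟨some i, by simp [hi, hm, j1]⟩
      · obtain ⟨m, hm⟩ := Y'.proper (Sum.inr k)
        obtain ⟨i, hi⟩ := V.proper m
        exact ⟨some i, by simp [hi, hm, j1]⟩
    · intro s hs
      set Y : Subspace (Option N ⊕ κ) α (Option M') := ⟨_, _⟩ with hYdef
      rcases h0 : s none with _ | a
      · have h1 : ∀ w, f (bx Y (Sum.elim s w)) = c := by
          intro w
          rw [← hV (bx Y' (Sum.elim (fun n => s (some n)) w))]
          congr 1
          funext i
          rcases i with _ | i
          · simp [bx, Subspace.apply_def, hYdef, h0]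
          · rw [bx_apply]; simp only [Subspace.apply_def, hYdef, Option.elim_some]
            rcases V.idxFun i with (_ | b) | m
            · simp [h0]
            · simp
            · simp only [Sum.elim_inr, bx_apply]
              rcases Y'.idxFun m with b | (n | k) <;> simp [j1]
        intro v v'
        rw [h1, h1]
      · have h1 : ∀ w, f (bx Y (Sum.elim s w)) =
            f (fun i => i.elim (some a) (Va a (bx Y' (Sum.elim (fun n => s (some n)) w)))) := by
          intro w
          congr 1
          funext i
          rcases i with _ | i
          · simp [bx, Subspace.apply_def, hYdef, h0]
          · rw [bx_apply]; simp only [Subspace.apply_def, hYdef, Option.elim_some, Va]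
            rcases V.idxFun i with (_ | b) | m
            · simp [h0]
            · simp
            · simp only [Sum.elim_inr, bx_apply]
              rcases Y'.idxFun m with b | (n | k) <;> simp [j1]
        intro v v'
        rw [h1, h1]
        obtain ⟨i, hi⟩ := hs
        rcases i with _ | n
        · rw [h0] at hi; cases hi
        · exact congrFun (hY' (fun n => s (some n)) ⟨n, hi⟩ v v') a

end SzRandom

end A3

section A4
namespace SzRandom
open Combinatorics

lemma av_lower {X : Type} [Finite X] [Nonempty X] (g : X → ℝ) (d γ : ℝ) (hγ : 0 ≤ γ)
    (h1 : d - γ ≤ av g) (h2 : ∀ x, g x ≤ d + γ) (x : X) : d - 2 * Nat.card X * γ ≤ g x := by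
  have := Fintype.ofFinite X
  rw [Nat.card_eq_fintype_card]
  have hK : (0:ℝ) < Fintype.card X := by positivity
  rw [av_eq, le_div_iff₀ hK] at h1
  have h3 : ∑ y ∈ Finset.univ.erase x, g y ≤ ((Fintype.card X : ℝ) - 1) * (d + γ) := by
    have := Finset.sum_le_card_nsmul (Finset.univ.erase x) g (d + γ) (fun y _ => h2 y)
    rw [Finset.card_erase_of_mem (Finset.mem_univ x), nsmul_eq_mul, Finset.card_univ,
      Nat.cast_sub Fintype.card_pos] at this
    simpa using this
  have h4 := Finset.add_sum_erase Finset.univ g (Finset.mem_univ x)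
  nlinarith

lemma prod_ind {ι : Type*} (s : Finset ι) (P : ι → Prop) :
    ∏ a ∈ s, ind (P a) = ind (∀ a ∈ s, P a) := by
  by_cases h : ∀ a ∈ s, P a
  · rw [ind_true h, Finset.prod_eq_one fun a ha => ind_true (h a ha)]
  · rw [ind_false h]
    push Not at h
    obtain ⟨a, ha, hP⟩ := h
    exact Finset.prod_eq_zero ha (ind_false hP)

lemma fiber {α : Type} [Fintype α] [Nonempty α] (h : HasDHJ α) (η : Type) [Finite η] (D ε : ℝ)
    (hD : 0 ≤ D) (hε : 0 < ε) (hη : ∀ A : Set (η → Option α), LF A → dens A ≤ D) :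
    ∃ (κ : Type) (_ : Finite κ), ∀ (F : Set (κ → Option α)) (E : α → Set (κ → α)), LF F →
      (∀ v ∈ F, ¬ ∀ a, pj a v ∈ E a) →
      dens F ≤ D * (1 - dens {v : κ → Option α | ∀ a, pj a v ∈ E a}) +
        2 ^ Fintype.card α * (3 ^ Fintype.card α * ε) := by
  obtain ⟨κ, hκ, H⟩ := chain h Finset.univ η ε hε
  refine ⟨κ, hκ, fun F E hF hFE => ?_⟩
  set C : Set (κ → Option α) := {v | ∀ a, pj a v ∈ E a} with hC
  let f : (κ → Option α) → ℝ := fun v => ind (v ∈ F) - D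
  have hf1 : ∀ v, f v ≤ 1 := fun v => by
    have := ind_le_one (v ∈ F)
    show ind (v ∈ F) - D ≤ 1
    linarith
  have hfU : ∀ U : Subspace η (Option α) κ, av (fun x => f (U x)) ≤ ε := by
    intro U
    have h1 : av (fun x => f (U x)) = dens {x | U x ∈ F} - D := by
      show av (fun x => ind (U x ∈ F) - D) = _
      rw [av_sub, av_const]
      rfl
    rw [h1]
    linarith [hη _ (hF.pull U)]
  have hsplit : ∀ v, f v = ∑ T ∈ (Finset.univ : Finset α).powerset, f v *
      ∏ a, ind (pj a v ∈ (if a ∈ T then E a else (E a)ᶜ)) := by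
    intro v
    rw [← Finset.mul_sum]
    have h1 : ∏ a : α, (ind (pj a v ∈ E a) + ind (pj a v ∈ (E a)ᶜ)) = 1 := by
      refine Finset.prod_eq_one fun a _ => ?_
      by_cases ha : pj a v ∈ E a
      · rw [ind_true ha, ind_false (by simpa using ha)]; norm_num
      · rw [ind_false ha, ind_true (by simpa using ha)]; norm_num
    rw [Finset.prod_add] at h1
    have h2 : ∑ T ∈ (Finset.univ : Finset α).powerset,
        ∏ a, ind (pj a v ∈ (if a ∈ T then E a else (E a)ᶜ)) = 1 := by
      rw [← h1]
      refine Finset.sum_congr rfl fun T _ => ?_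
      rw [← Finset.prod_sdiff (Finset.subset_univ T), mul_comm]
      congr 1
      · refine Finset.prod_congr rfl fun a ha => ?_
        rw [if_pos ha]
      · refine Finset.prod_congr rfl fun a ha => ?_
        rw [if_neg (Finset.mem_sdiff.1 ha).2]
    rw [h2, mul_one]
  have hT : ∀ T ∈ (Finset.univ : Finset α).powerset,
      av (fun v => f v * ∏ a, ind (pj a v ∈ (if a ∈ T then E a else (E a)ᶜ))) ≤
      3 ^ Fintype.card α * ε + (if T = Finset.univ then - (D * dens C) else 0) := by
    intro T _
    by_cases hTu : T = Finset.univ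
    · subst hTu
      rw [if_pos rfl]
      have h1 : av (fun v => f v * ∏ a, ind (pj a v ∈
          (if a ∈ (Finset.univ : Finset α) then E a else (E a)ᶜ))) = - D * dens C := by
        unfold dens
        rw [← av_mul_left]
        refine av_congr fun v => ?_
        simp only [Finset.mem_univ, if_true]
        rw [prod_ind]
        simp only [Finset.mem_univ, forall_true_left]
        by_cases hv : ∀ a, pj a v ∈ E a
        · rw [ind_true hv, ind_true (p := v ∈ C) hv]
          have : v ∉ F := fun hvF => hFE v hvF hv
          show (ind (v ∈ F) - D) * 1 = _
          rw [ind_false this]; ring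
        · rw [ind_false hv, ind_false (p := v ∈ C) hv]; ring
      rw [h1]
      have : 0 < (3:ℝ) ^ Fintype.card α * ε := by positivity
      linarith
    · rw [if_neg hTu, add_zero]
      have := H (fun a => if a ∈ T then E a else (E a)ᶜ) f hf1 hfU
      rwa [Finset.card_univ] at this
  have hmain : av f ≤ 2 ^ Fintype.card α * (3 ^ Fintype.card α * ε) - D * dens C := by
    rw [av_congr hsplit, av_sum]
    refine (Finset.sum_le_sum hT).trans (le_of_eq ?_)
    rw [Finset.sum_add_distrib, Finset.sum_const, Finset.card_powerset, Finset.card_univ,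
      Finset.sum_ite_eq']
    simp
    ring
  have h1 : av f = dens F - D := by
    show av (fun x => ind (x ∈ F) - D) = _
    rw [av_sub, av_const]
    rfl
  linarith

lemma dhj_step {α : Type} [Finite α] [Nonempty α] (h : HasDHJ α) : HasDHJ (Option α) := by
  have := Fintype.ofFinite α
  by_contra hcon
  unfold HasDHJ at hcon
  push Not at hcon
  obtain ⟨ε0, hε0, hcon⟩ := hcon
  let S : Set ℝ := {x | ∃ (ι : Type) (_ : Finite ι), ∀ A : Set (ι → Option α), LF A → dens A ≤ x}
  have hS1 : (1:ℝ) ∈ S := ⟨Unit, inferInstance, fun A _ => dens_le_one A⟩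
  have hSlow : ∀ x ∈ S, ε0 ≤ x := by
    rintro x ⟨ι, hι, hx⟩
    obtain ⟨A, hA, hLF⟩ := hcon ι hι
    exact hA.trans (hx A hLF)
  set d := sInf S with hd
  have hd0 : 0 < d := hε0.trans_le (le_csInf ⟨1, hS1⟩ hSlow)
  have hbdd : BddBelow S := ⟨ε0, hSlow⟩
  have hup : ∀ γ > 0, ∃ (ι : Type) (_ : Finite ι),
      ∀ A : Set (ι → Option α), LF A → dens A ≤ d + γ := by
    intro γ hγ
    obtain ⟨x, ⟨ι, hι, hx⟩, hxd⟩ := exists_lt_of_csInf_lt ⟨1, hS1⟩ (show sInf S < d + γ by linarith)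
    exact ⟨ι, hι, fun A hA => (hx A hA).trans hxd.le⟩
  have hlow : ∀ γ > 0, ∀ (ι : Type) [Finite ι], ∃ A : Set (ι → Option α), LF A ∧ d - γ ≤ dens A := by
    intro γ hγ ι hι
    by_contra! hc
    have : d - γ ∈ S := ⟨ι, hι, fun A hA => (hc A hA).le⟩
    have := csInf_le hbdd this
    linarith
  obtain ⟨ι0, hι0, θ, hθ, hev⟩ := events h (d / 2) (by positivity)
  set γ0 := d * θ / 8 with hγ0
  have hγ0p : 0 < γ0 := by positivity
  obtain ⟨η, hη, hηLF⟩ := hup γ0 hγ0p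
  obtain ⟨κ, hκ, hfib⟩ := fiber h η (d + γ0) (d * θ / 8 / 2 ^ Fintype.card α / 3 ^ Fintype.card α)
    (by positivity) (by positivity) hηLF
  have hεeq : (2:ℝ) ^ Fintype.card α * (3 ^ Fintype.card α *
    (d * θ / 8 / 2 ^ Fintype.card α / 3 ^ Fintype.card α)) = d * θ / 8 := by
    field_simp
  rw [hεeq] at hfib
  obtain ⟨M, hM, hstab⟩ := stab (α := α) κ ι0 Prop
  set γ2 := min (d * θ / 8) (d / 2) with hγ2
  have hγ2p : 0 < γ2 := by positivity
  have hK : (0:ℝ) < Nat.card (M → Option α) := by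
    exact_mod_cast Nat.card_pos
  set γ1 := γ2 / (2 * Nat.card (M → Option α)) with hγ1
  have hγ1p : 0 < γ1 := by positivity
  obtain ⟨R, hR, hRLF⟩ := hup γ1 hγ1p
  obtain ⟨A, hALF, hAd⟩ := hlow γ1 hγ1p (M ⊕ R)
  let Dt : (M → Option α) → Set (R → Option α) := fun t => {y | Sum.elim t y ∈ A}
  have hDt : ∀ t, d - γ2 ≤ dens (Dt t) := by
    intro t
    have h1 := av_lower (fun t => dens (Dt t)) d γ1 hγ1p.le (by
      refine hAd.trans (le_of_eq ?_)
      unfold dens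
      rw [av_elim]
      rfl) (fun t => by
        refine hRLF _ ?_
        have := hALF.pull (sFixL t (sId R (Option α)))
        simp only [sFixL_apply, sId_apply] at this
        exact this) t
    have h2 : 2 * (Nat.card (M → Option α) : ℝ) * γ1 = γ2 := by
      rw [hγ1]; field_simp
    rw [h2] at h1
    exact h1
  obtain ⟨Y, hY⟩ := hstab (fun t => θ ≤ dens {y : R → Option α | ∀ a,
    Sum.elim (fun i => some (pj a t i)) y ∈ A})
  obtain ⟨v0⟩ : Nonempty (κ → α) := inferInstance
  obtain ⟨l, hl⟩ := hev (R → Option α) (fun s => Dt (fun i => some (Y (Sum.elim s v0) i))) (by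
    have h1 : ∀ s : ι0 → α, d / 2 ≤ dens (Dt (fun i => some (Y (Sum.elim s v0) i))) := by
      intro s
      have := hDt (fun i => some (Y (Sum.elim s v0) i))
      have := min_le_right (d * θ / 8) (d / 2)
      linarith
    exact (av_const (X := ι0 → α) (d / 2)).symm.le.trans (av_mono h1))
  have hpjY : ∀ a v, pj a (bx Y (Sum.elim l.idxFun v)) = Y (Sum.elim (l a) (pj a v)) := by
    intro a v
    rw [pj_bx, pj_elim]
    rfl
  have hgood : ∀ v : κ → Option α, θ ≤ dens {y : R → Option α | ∀ a,
      Sum.elim (fun i => some (Y (Sum.elim (l a) (pj a v)) i)) y ∈ A} := by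
    intro v
    have h1 := hY l.idxFun l.proper v (fun i => some (v0 i))
    simp only [hpjY] at h1
    rw [h1]
    exact hl
  have hfy : ∀ y : R → Option α,
      dens {v : κ → Option α | Sum.elim (bx Y (Sum.elim l.idxFun v)) y ∈ A} ≤
      (d + γ0) * (1 - dens {v : κ → Option α | ∀ a,
        Sum.elim (fun i => some (Y (Sum.elim (l a) (pj a v)) i)) y ∈ A}) + d * θ / 8 := by
    intro y
    refine hfib _ (fun a => {t | Sum.elim (fun i => some (Y (Sum.elim (l a) t) i)) y ∈ A}) ?_ ?_
    · have := hALF.pull (sFixR (sComp (bx Y) (sFixL l.idxFun (sId κ (Option α)))) y)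
      simp only [sFixR_apply, sComp_apply, sFixL_apply, sId_apply] at this
      exact this
    · intro v hv hall
      refine hALF ⟨⟨Sum.elim (fun i => (bx Y (Sum.elim l.idxFun v) i).map some)
        (fun j => some (y j)), ?_⟩, ?_⟩
      · obtain ⟨j, hj⟩ := l.proper
        obtain ⟨i, hi⟩ := Y.proper (Sum.inl j)
        exact ⟨Sum.inl i, by simp [bx_apply, hi, hj]⟩
      · intro b
        rcases b with _ | a
        · have hv' : Sum.elim (bx Y (Sum.elim l.idxFun v)) y ∈ A := hv
          convert hv' using 1
          funext i
          rcases i with i | i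
          · simp only [Line.apply_def, Sum.elim_inl]
            rcases bx Y (Sum.elim l.idxFun v) i with _ | b <;> simp
          · simp [Line.apply_def]
        · have hv' : Sum.elim (fun i => some (Y (Sum.elim (l a) (pj a v)) i)) y ∈ A := hall a
          rw [← hpjY] at hv'
          convert hv' using 1
          funext i
          rcases i with i | i
          · simp only [Line.apply_def, Sum.elim_inl, pj]
            rcases bx Y (Sum.elim l.idxFun v) i with _ | b <;> simp
          · simp [Line.apply_def]
  have hav := av_mono hfy
  rw [av_add, av_const, av_mul_left, av_sub, av_const] at hav
  have h1 : d - γ2 ≤ av (fun y : R → Option α =>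
      dens {v : κ → Option α | Sum.elim (bx Y (Sum.elim l.idxFun v)) y ∈ A}) := by
    have h2 : av (fun y : R → Option α =>
      dens {v : κ → Option α | Sum.elim (bx Y (Sum.elim l.idxFun v)) y ∈ A}) =
      av (fun v : κ → Option α => dens (Dt (bx Y (Sum.elim l.idxFun v)))) := av_comm _
    rw [h2]
    exact (av_const (X := κ → Option α) (d - γ2)).symm.le.trans (av_mono fun v => hDt _)
  have h2 : θ ≤ av (fun y : R → Option α => dens {v : κ → Option α | ∀ a,
        Sum.elim (fun i => some (Y (Sum.elim (l a) (pj a v)) i)) y ∈ A}) := by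
    have h3 : av (fun y : R → Option α => dens {v : κ → Option α | ∀ a,
        Sum.elim (fun i => some (Y (Sum.elim (l a) (pj a v)) i)) y ∈ A}) =
      av (fun v : κ → Option α => dens {y : R → Option α | ∀ a,
        Sum.elim (fun i => some (Y (Sum.elim (l a) (pj a v)) i)) y ∈ A}) := av_comm _
    rw [h3]
    exact (av_const (X := κ → Option α) θ).symm.le.trans (av_mono fun v => hgood v)
  have h3 := min_le_left (d * θ / 8) (d / 2)
  have h4 : (d + γ0) * θ ≤ (d + γ0) * av (fun y : R → Option α => dens {v : κ → Option α | ∀ a,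
        Sum.elim (fun i => some (Y (Sum.elim (l a) (pj a v)) i)) y ∈ A}) :=
    mul_le_mul_of_nonneg_left h2 (by positivity)
  have h5 : 0 < d * θ := by positivity
  have h6 : 0 < γ0 * θ := by positivity
  nlinarith

lemma dhj_equiv {α β : Type} [Finite α] [Finite β] (e : α ≃ β) (h : HasDHJ α) : HasDHJ β := by
  intro ε hε
  obtain ⟨ι, hι, H⟩ := h ε hε
  refine ⟨ι, hι, fun A hA hLF => ?_⟩
  refine H {x | (fun i => e (x i)) ∈ A} (hA.trans (le_of_eq ?_)) ?_
  · unfold dens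
    rw [← av_equiv (Equiv.arrowCongr (Equiv.refl ι) e)]
    rfl
  · rintro ⟨l, hl⟩
    refine hLF ⟨l.map e, fun b => ?_⟩
    have := hl (e.symm b)
    have h2 : (fun i => e (l (e.symm b) i)) ∈ A := this
    convert h2 using 1
    funext i
    simp only [Line.apply_def, Line.map]
    rcases l.idxFun i with _ | c <;> simp

lemma dhj_unit : HasDHJ Unit := by
  intro ε hε
  refine ⟨Unit, inferInstance, fun A hA hLF => ?_⟩
  obtain ⟨x, hx⟩ := exists_of_dens_pos (hε.trans_le hA)
  exact hLF ⟨⟨fun _ => none, ⟨(), rfl⟩⟩, fun a => by convert hx⟩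

theorem dhj_fin (k : ℕ) : HasDHJ (Fin (k + 1)) := by
  induction k with
  | zero => exact dhj_equiv (Equiv.ofUnique Unit (Fin 1)) dhj_unit
  | succ k ih => exact dhj_equiv (finSuccEquiv (k + 1)).symm (dhj_step ih)

end SzRandom

end A4

section B1
namespace SzRandom
open Combinatorics

/-- pairs describing the progressions of length `k` in `B` -/
noncomputable def apPairs (n k : ℕ) (B : Finset ℕ) : Finset (ℕ × ℕ) :=
  (Finset.Icc 1 n ×ˢ Finset.Icc 1 n).filter fun q => ∀ i < k, q.1 + i * q.2 ∈ B

lemma line_sum {ι : Type} [Fintype ι] {k : ℕ} (l : Line (Fin k) ι) :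
    ∃ σ w : ℕ, 1 ≤ w ∧ w ≤ Fintype.card ι ∧ σ ≤ k * Fintype.card ι ∧
      ∀ j : Fin k, ∑ i, ((l j i : Fin k) : ℕ) = σ + j * w := by
  refine ⟨∑ i, (l.idxFun i).elim 0 (fun c => (c : ℕ)),
    (Finset.univ.filter fun i => l.idxFun i = none).card, ?_, ?_, ?_, ?_⟩
  · obtain ⟨i, hi⟩ := l.proper
    exact Finset.card_pos.2 ⟨i, by simpa using hi⟩
  · exact Finset.card_le_univ _
  · refine (Finset.sum_le_card_nsmul _ _ k fun i _ => ?_).trans ?_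
    · rcases l.idxFun i with _ | c
      · simp
      · simp
    · simp [mul_comm]
  · intro j
    rw [Finset.card_filter, Finset.mul_sum, ← Finset.sum_add_distrib]
    refine Finset.sum_congr rfl fun i _ => ?_
    simp only [Line.apply_def]
    rcases l.idxFun i with _ | c <;> simp

lemma shift_count (n : ℕ) (B : Finset ℕ) (hB : B ⊆ Finset.Icc 1 n) (t : ℕ) :
    B.card ≤ ((Finset.Icc 1 n).filter fun a => a + t ∈ B).card + t := by
  have h1 : (B.filter fun y => t < y).card ≤ ((Finset.Icc 1 n).filter fun a => a + t ∈ B).card := by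
    refine Finset.card_le_card_of_injOn (fun y => y - t) ?_ ?_
    · intro y hy
      simp only [Finset.coe_filter, Set.mem_ofPred_eq, Finset.mem_Icc] at hy ⊢
      have := Finset.mem_Icc.1 (hB hy.1)
      refine ⟨⟨by omega, by omega⟩, ?_⟩
      rw [Nat.sub_add_cancel hy.2.le]
      exact hy.1
    · intro y hy z hz h
      simp only [Finset.coe_filter, Set.mem_ofPred_eq] at hy hz
      simp only at h
      omega
  have h2 : (B.filter fun y => ¬ t < y).card ≤ t := by
    have : (B.filter fun y => ¬ t < y) ⊆ Finset.Icc 1 t := by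
      intro y hy
      rw [Finset.mem_filter] at hy
      have := Finset.mem_Icc.1 (hB hy.1)
      rw [Finset.mem_Icc]
      omega
    simpa using Finset.card_le_card this
  have h3 := Finset.card_filter_add_card_filter_not (s := B) (fun y => t < y)
  omega

theorem varnavides (K : ℕ) (δ : ℝ) (hδ : 0 < δ) : ∃ c : ℝ, 0 < c ∧ ∃ n0 : ℕ, ∀ n ≥ n0,
    ∀ B ⊆ Finset.Icc 1 n, δ * n ≤ (B.card : ℝ) →
      c * (n : ℝ) ^ 2 ≤ ((apPairs n (K + 1) B).card : ℝ) := by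
  obtain ⟨ι, hι, H⟩ := dhj_fin K (δ / 4) (by positivity)
  have := Fintype.ofFinite ι
  set N := Fintype.card ι with hN
  set m := (K + 1) * N + 1 with hm
  have hmN : N ≤ m := by rw [hm]; nlinarith
  refine ⟨δ ^ 2 / (16 * m * (m + 1) * (N + 1)), by positivity, ⌈4 * m / δ⌉₊ + 1, ?_⟩
  intro n hn B hB hBc
  have hn1 : 1 ≤ n := by omega
  have hnR : (4 * m / δ : ℝ) ≤ n := (Nat.le_ceil _).trans (Nat.cast_le.2 (by omega))
  have hm0 : (0:ℝ) < m := by positivity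
  rw [div_le_iff₀ hδ] at hnR
  have hn0 : (0:ℝ) < n := by positivity
  have hδ1 : δ ≤ 1 := by
    have h1 : B.card ≤ n := by simpa using Finset.card_le_card hB
    have h2 : (B.card : ℝ) ≤ n := by exact_mod_cast h1
    by_contra! hc
    nlinarith
  set L := ⌊δ * n / (2 * m)⌋₊ with hL
  have hL1 : (L : ℝ) ≤ δ * n / (2 * m) := Nat.floor_le (by positivity)
  have hL2 : δ * n / (4 * m) ≤ L := by
    have h1 := Nat.lt_floor_add_one (δ * n / (2 * m))
    rw [← hL] at h1
    have h2 : 1 ≤ δ * n / (4 * m) := by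
      rw [le_div_iff₀ (by positivity)]; linarith
    have h3 : δ * n / (2 * m) = 2 * (δ * n / (4 * m)) := by field_simp; ring
    linarith
  have hLm : (L : ℝ) * m ≤ δ * n / 2 := by
    rw [le_div_iff₀ (by positivity)] at hL1
    linarith
  let X := Finset.Icc 1 n ×ˢ Finset.Icc 1 L
  let S : ℕ × ℕ → Set (ι → Fin (K + 1)) := fun q => {x | q.1 + q.2 * ∑ i, ((x i : Fin (K+1)) : ℕ) ∈ B}
  let good := X.filter fun q => δ / 4 ≤ dens (S q)
  have hlow : (L : ℝ) * (δ * n / 2) ≤ ∑ q ∈ X, dens (S q) := by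
    unfold dens
    rw [← av_sum]
    refine (av_const (X := ι → Fin (K + 1)) _).symm.le.trans (av_mono fun x => ?_)
    show _ ≤ ∑ q ∈ X, ind (q.1 + q.2 * ∑ i, ((x i : Fin (K+1)) : ℕ) ∈ B)
    rw [Finset.sum_product_right]
    have hs : ∑ i, ((x i : Fin (K+1)) : ℕ) ≤ m := by
      refine (Finset.sum_le_card_nsmul _ _ (K + 1) fun i _ => (x i).2.le).trans ?_
      simp only [Finset.card_univ, smul_eq_mul, hm]
      nlinarith
    have hb : ∀ b ∈ Finset.Icc 1 L, δ * n / 2 ≤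
        ∑ a ∈ Finset.Icc 1 n, ind (a + b * ∑ i, ((x i : Fin (K+1)) : ℕ) ∈ B) := by
      intro b hb
      rw [Finset.mem_Icc] at hb
      have h1 := shift_count n B hB (b * ∑ i, ((x i : Fin (K+1)) : ℕ))
      have h2 : b * ∑ i, ((x i : Fin (K+1)) : ℕ) ≤ L * m := Nat.mul_le_mul hb.2 hs
      have h3 : (B.card : ℝ) ≤ (((Finset.Icc 1 n).filter fun a =>
        a + b * ∑ i, ((x i : Fin (K+1)) : ℕ) ∈ B).card : ℝ) + L * m := by
        exact_mod_cast h1.trans (by omega)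
      have h4 : ∑ a ∈ Finset.Icc 1 n, ind (a + b * ∑ i, ((x i : Fin (K+1)) : ℕ) ∈ B) =
        (((Finset.Icc 1 n).filter fun a =>
        a + b * ∑ i, ((x i : Fin (K+1)) : ℕ) ∈ B).card : ℝ) := by
        rw [Finset.card_filter]
        push_cast
        refine Finset.sum_congr rfl fun a _ => ?_
        simp [ind]
      rw [h4]
      linarith
    have := Finset.card_nsmul_le_sum _ _ _ hb
    simpa using this
  have hup : ∑ q ∈ X, dens (S q) ≤ (good.card : ℝ) + δ / 4 * (n * L) := by
    have h1 : ∀ q ∈ X, dens (S q) ≤ (if δ / 4 ≤ dens (S q) then 1 else 0) + δ / 4 := by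
      intro q _
      split_ifs with hq
      · linarith [dens_le_one (S q)]
      · linarith
    refine (Finset.sum_le_sum h1).trans (le_of_eq ?_)
    rw [Finset.sum_add_distrib, Finset.sum_const, nsmul_eq_mul]
    have h2 : (X.card : ℝ) = n * L := by simp [X]
    rw [h2]
    have h3 : (good.card : ℝ) = ∑ q ∈ X, (if δ / 4 ≤ dens (S q) then (1:ℝ) else 0) := by
      rw [Finset.card_filter]; push_cast; rfl
    rw [h3]; ring
  have hgl : ∀ q, ∃ σw : ℕ × ℕ, q ∈ good → 1 ≤ σw.2 ∧ σw.2 ≤ N ∧ σw.1 ≤ m ∧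
      ∀ j < K + 1, (q.1 + q.2 * σw.1) + j * (q.2 * σw.2) ∈ B := by
    intro q
    by_cases hq : q ∈ good
    · have hq' := (Finset.mem_filter.1 hq).2
      have := H _ hq'
      unfold LF at this
      push Not at this
      obtain ⟨l, hl⟩ := this
      obtain ⟨σ, w, h1, h2, h3, h4⟩ := line_sum l
      refine ⟨(σ, w), fun _ => ⟨h1, h2, h3.trans (Nat.le_succ _), fun j hj => ?_⟩⟩
      have h5 : q.1 + q.2 * ∑ i, ((l ⟨j, hj⟩ i : Fin (K+1)) : ℕ) ∈ B := hl ⟨j, hj⟩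
      rw [h4] at h5
      convert h5 using 1
      simp only
      ring
    · exact ⟨(0, 0), fun h => absurd h hq⟩
  choose g hg using hgl
  have hcard : good.card ≤ (apPairs n (K + 1) B ×ˢ (Finset.range (m + 1) ×ˢ
      Finset.range (N + 1))).card := by
    refine Finset.card_le_card_of_injOn
      (fun q => ((q.1 + q.2 * (g q).1, q.2 * (g q).2), g q)) ?_ ?_
    · intro q hq
      have hq : q ∈ good := hq
      obtain ⟨h1, h2, h3, h4⟩ := hg q hq
      have hqX := (Finset.mem_filter.1 hq).1
      obtain ⟨hq1, hq2⟩ := Finset.mem_product.1 hqX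
      rw [Finset.mem_Icc] at hq1 hq2
      have h5 : q.2 * (g q).2 ≤ n := by
        have h6 : q.2 * (g q).2 ≤ L * m := Nat.mul_le_mul hq2.2 (h2.trans hmN)
        have h7 : ((L * m : ℕ) : ℝ) ≤ n := by push_cast; nlinarith
        have h8 : L * m ≤ n := by exact_mod_cast h7
        omega
      have h6 := h4 0 (by omega)
      simp only [zero_mul, add_zero] at h6
      have h7 := hB h6
      simp only [Finset.coe_product, Set.mem_prod, Finset.mem_coe, Finset.mem_range, apPairs,
        Finset.mem_filter, Finset.mem_product]
      refine ⟨⟨⟨h7, ?_⟩, h4⟩, by omega, by omega⟩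
      rw [Finset.mem_Icc]
      exact ⟨Nat.mul_pos hq2.1 h1, h5⟩
    · intro q hq r hr h
      obtain ⟨h1, -⟩ := hg q hq
      simp only [Prod.mk.injEq] at h
      obtain ⟨⟨h2, h3⟩, h4⟩ := h
      rw [← h4] at h2 h3
      have h5 : q.2 = r.2 := Nat.eq_of_mul_eq_mul_right h1 h3
      rw [h5] at h2
      exact Prod.ext (by omega) h5
  rw [Finset.card_product, Finset.card_product, Finset.card_range, Finset.card_range] at hcard
  have hcardR : (good.card : ℝ) ≤ ((apPairs n (K + 1) B).card : ℝ) * ((m + 1) * (N + 1)) := by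
    exact_mod_cast hcard
  have h1 : δ ^ 2 * n ^ 2 / (16 * m) ≤ (good.card : ℝ) := by
    have h2 : δ / 4 * n * L ≤ good.card := by linarith
    have h3 : δ / 4 * n * (δ * n / (4 * m)) ≤ δ / 4 * n * L :=
      mul_le_mul_of_nonneg_left hL2 (by positivity)
    have h4 : δ / 4 * n * (δ * n / (4 * m)) = δ ^ 2 * n ^ 2 / (16 * m) := by field_simp; ring
    linarith
  have h2 : δ ^ 2 / (16 * m * (m + 1) * (N + 1)) * (n : ℝ) ^ 2 =
      (δ ^ 2 * n ^ 2 / (16 * m)) / ((m + 1) * (N + 1)) := by field_simp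
  rw [h2, div_le_iff₀ (by positivity)]
  linarith

end SzRandom

end B1

section C1
namespace SzRandom

/-- a pair (container, fingerprint) of functions computed by a decision tree -/
def Cons (R S : Finset ℕ → Finset ℕ) : Prop :=
  ∀ I, S I ⊆ I ∧ ∀ J, S I ⊆ J → J ⊆ I → R J = R I ∧ S J = S I

lemma Cons.const (F : Finset ℕ) : Cons (fun _ => F) (fun _ => ∅) :=
  fun I => ⟨Finset.empty_subset I, fun _ _ _ => ⟨rfl, rfl⟩⟩

lemma Cons.node {R1 S1 R2 S2 : Finset ℕ → Finset ℕ} (h1 : Cons R1 S1) (h2 : Cons R2 S2) (v : ℕ) :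
    Cons (fun I => if v ∈ I then R1 I else R2 I)
      (fun I => if v ∈ I then insert v (S1 I) else S2 I) := by
  intro I
  by_cases hv : v ∈ I
  · simp only [hv, if_true]
    refine ⟨Finset.insert_subset hv (h1 I).1, fun J hJ1 hJ2 => ?_⟩
    have hvJ : v ∈ J := hJ1 (Finset.mem_insert_self _ _)
    simp only [hvJ, if_true]
    obtain ⟨h3, h4⟩ := (h1 I).2 J ((Finset.subset_insert _ _).trans hJ1) hJ2
    rw [h3, h4]
    exact ⟨rfl, rfl⟩
  · simp only [hv, if_false]
    refine ⟨(h2 I).1, fun J hJ1 hJ2 => ?_⟩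
    have hvJ : v ∉ J := fun h => hv (hJ2 h)
    simp only [hvJ, if_false]
    exact (h2 I).2 J hJ1 hJ2

lemma Cons.bind {R1 S1 : Finset ℕ → Finset ℕ} {R2 S2 : Finset ℕ → Finset ℕ → Finset ℕ}
    (h1 : Cons R1 S1) (h2 : ∀ F, Cons (R2 F) (S2 F)) :
    Cons (fun I => R2 (R1 I) I) (fun I => S1 I ∪ S2 (R1 I) I) := by
  intro I
  refine ⟨Finset.union_subset (h1 I).1 (h2 _ I).1, fun J hJ1 hJ2 => ?_⟩
  obtain ⟨h3, h4⟩ := (h1 I).2 J (Finset.subset_union_left.trans hJ1) hJ2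
  obtain ⟨h5, h6⟩ := (h2 (R1 I) I).2 J (Finset.subset_union_right.trans hJ1) hJ2
  simp only [h3, h4, h5, h6]
  exact ⟨trivial, trivial⟩

/-- weighted degree -/
noncomputable def deg (X : Finset ℕ) (H : Finset ℕ → ℝ) (σ : Finset ℕ) : ℝ :=
  ∑ e ∈ X.powerset, if σ ⊆ e then H e else 0

/-- weighted `r`-uniform hypergraph on `C` -/
def HG (C : Finset ℕ) (r : ℕ) (H : Finset ℕ → ℝ) : Prop :=
  (∀ e, 0 ≤ H e) ∧ ∀ e, H e ≠ 0 → e ⊆ C ∧ e.card = r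

/-- bounded degrees at scale `p` -/
def DegB (X : Finset ℕ) (p B : ℝ) (H : Finset ℕ → ℝ) : Prop :=
  ∀ σ : Finset ℕ, σ.Nonempty → deg X H σ ≤ B * p ^ (σ.card - 1)

/-- independent sets -/
def Indep (H : Finset ℕ → ℝ) (I : Finset ℕ) : Prop := ∀ e ⊆ I, H e = 0

/-- the link of a vertex -/
noncomputable def link (W : Finset ℕ → ℝ) (v : ℕ) (f : Finset ℕ) : ℝ :=
  if v ∈ f then 0 else W (insert v f)

lemma deg_nonneg {X : Finset ℕ} {H : Finset ℕ → ℝ} (h : ∀ e, 0 ≤ H e) (σ : Finset ℕ) :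
    0 ≤ deg X H σ :=
  Finset.sum_nonneg fun e _ => by split_ifs; exacts [h e, le_rfl]

lemma deg_mono {X : Finset ℕ} {H H' : Finset ℕ → ℝ} (h : ∀ e, H e ≤ H' e) (σ : Finset ℕ) :
    deg X H σ ≤ deg X H' σ :=
  Finset.sum_le_sum fun e _ => by split_ifs; exacts [h e, le_rfl]

lemma deg_add (X : Finset ℕ) (H H' : Finset ℕ → ℝ) (c : ℝ) (σ : Finset ℕ) :
    deg X (fun e => H e + c * H' e) σ = deg X H σ + c * deg X H' σ := by
  unfold deg
  rw [Finset.mul_sum, ← Finset.sum_add_distrib]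
  refine Finset.sum_congr rfl fun e _ => ?_
  split_ifs <;> simp

lemma deg_link_mem (X : Finset ℕ) (W : Finset ℕ → ℝ) (v : ℕ) (σ : Finset ℕ)
    (hvσ : v ∈ σ) : deg X (link W v) σ = 0 := by
  refine Finset.sum_eq_zero fun e _ => ?_
  split_ifs with h
  · exact if_pos (h hvσ)
  · rfl

lemma deg_link (X : Finset ℕ) (W : Finset ℕ → ℝ) (v : ℕ) (hv : v ∈ X) (σ : Finset ℕ)
    (hvσ : v ∉ σ) : deg X (link W v) σ = deg X W (insert v σ) := by
  have h1 : deg X (link W v) σ = ∑ e ∈ X.powerset with (σ ⊆ e ∧ v ∉ e), W (insert v e) := by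
    rw [Finset.sum_filter]
    refine Finset.sum_congr rfl fun e _ => ?_
    unfold link
    by_cases h1 : σ ⊆ e <;> by_cases h2 : v ∈ e <;> simp [h1, h2]
  have h2 : deg X W (insert v σ) = ∑ e ∈ X.powerset with (insert v σ ⊆ e), W e := by
    rw [Finset.sum_filter]; rfl
  rw [h1, h2]
  refine Finset.sum_nbij' (fun e => insert v e) (fun e => e.erase v) ?_ ?_ ?_ ?_ ?_
  · intro e he
    simp only [Finset.mem_filter, Finset.mem_powerset] at he ⊢
    exact ⟨Finset.insert_subset hv he.1, Finset.insert_subset_insert _ he.2.1⟩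
  · intro e he
    simp only [Finset.mem_filter, Finset.mem_powerset] at he ⊢
    refine ⟨(Finset.erase_subset _ _).trans he.1, ?_, Finset.notMem_erase _ _⟩
    rw [Finset.subset_erase]
    exact ⟨(Finset.subset_insert _ _).trans he.2, hvσ⟩
  · intro e he
    simp only [Finset.mem_filter, Finset.mem_powerset] at he
    exact Finset.erase_insert he.2.2
  · intro e he
    simp only [Finset.mem_filter, Finset.mem_powerset] at he
    exact Finset.insert_erase (he.2 (Finset.mem_insert_self _ _))
  · intro e he; rfl

lemma sum_deg_le (X : Finset ℕ) (C : Finset ℕ) (r : ℕ) (G : Finset ℕ → ℝ) (hG : HG C r G) :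
    ∑ σ ∈ X.powerset, deg X G σ ≤ 2 ^ r * deg X G ∅ := by
  unfold deg
  rw [Finset.sum_comm, Finset.mul_sum]
  refine Finset.sum_le_sum fun e he => ?_
  rw [if_pos (Finset.empty_subset e), ← Finset.sum_filter, Finset.sum_const, nsmul_eq_mul]
  by_cases h0 : G e = 0
  · rw [h0]; simp
  · refine mul_le_mul_of_nonneg_right ?_ (hG.1 e)
    have h1 : (X.powerset.filter fun σ => σ ⊆ e) ⊆ e.powerset := by
      intro σ hσ
      exact Finset.mem_powerset.2 (Finset.mem_filter.1 hσ).2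
    have h2 := Finset.card_le_card h1
    rw [Finset.card_powerset, (hG.2 e h0).2] at h2
    exact_mod_cast h2

lemma exists_popular (X C : Finset ℕ) (r : ℕ) (W : Finset ℕ → ℝ) (hW : HG C (r + 1) W)
    (γ : ℝ) (hX : 0 < X.card) (h : γ * X.card ≤ deg X W ∅) : ∃ v ∈ X, γ ≤ deg X W {v} := by
  by_contra! hc
  have h1 : ∑ v ∈ X, deg X W {v} < ∑ v ∈ X, γ :=
    Finset.sum_lt_sum_of_nonempty (Finset.card_pos.1 hX) hc
  rw [Finset.sum_const, nsmul_eq_mul] at h1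
  have h2 : deg X W ∅ ≤ ∑ v ∈ X, deg X W {v} := by
    unfold deg
    rw [Finset.sum_comm]
    refine Finset.sum_le_sum fun e he => ?_
    rw [if_pos (Finset.empty_subset e), ← Finset.sum_filter, Finset.sum_const, nsmul_eq_mul]
    by_cases h0 : W e = 0
    · rw [h0]; simp
    · have h3 : 1 ≤ (X.filter fun v => {v} ⊆ e).card := by
        have h4 := (hW.2 e h0).2
        obtain ⟨v, hv⟩ := Finset.card_pos.1 (show 0 < e.card by omega)
        exact Finset.card_pos.2 ⟨v, Finset.mem_filter.2
          ⟨Finset.mem_powerset.1 he hv, Finset.singleton_subset_iff.2 hv⟩⟩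
      have h4 : (1:ℝ) ≤ ((X.filter fun v => {v} ⊆ e).card : ℝ) := by exact_mod_cast h3
      nlinarith [hW.1 e]
  linarith [mul_comm γ (X.card : ℝ)]

/-- saturated sets -/
def Sat (X : Finset ℕ) (p B : ℝ) (G : Finset ℕ → ℝ) (σ : Finset ℕ) : Prop :=
  σ.Nonempty ∧ B * p ^ (σ.card - 1) ≤ deg X G σ

/-- current restriction of `H` -/
noncomputable def cur (X : Finset ℕ) (p B : ℝ) (H G : Finset ℕ → ℝ) (Z : Finset ℕ)
    (e : Finset ℕ) : ℝ :=
  if Disjoint e Z ∧ ∀ σ ⊆ e, ¬ Sat X p B G σ then H e else 0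

lemma cur_le {X : Finset ℕ} {p B : ℝ} {H G : Finset ℕ → ℝ} {Z : Finset ℕ} (hH : ∀ e, 0 ≤ H e)
    (e : Finset ℕ) : cur X p B H G Z e ≤ H e := by
  unfold cur; split_ifs; exacts [le_rfl, hH e]

lemma cur_nonneg {X : Finset ℕ} {p B : ℝ} {H G : Finset ℕ → ℝ} {Z : Finset ℕ} (hH : ∀ e, 0 ≤ H e)
    (e : Finset ℕ) : 0 ≤ cur X p B H G Z e := by
  unfold cur; split_ifs; exacts [hH e, le_rfl]

lemma cur_total (X C : Finset ℕ) (p B : ℝ) (r : ℕ) (H G : Finset ℕ → ℝ) (Z : Finset ℕ)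
    (hH : ∀ e, 0 ≤ H e) (hB : DegB X p B H) (hG : HG C r G) :
    deg X H ∅ ≤ deg X (cur X p B H G Z) ∅ + Z.card * B + 2 ^ r * deg X G ∅ := by
  have h1 : deg X H ∅ ≤ deg X (cur X p B H G Z) ∅ + ∑ z ∈ Z, deg X H {z} +
      ∑ σ ∈ X.powerset with Sat X p B G σ, deg X H σ := by
    unfold deg
    rw [Finset.sum_comm (s := Z), Finset.sum_comm (t := X.powerset), ← Finset.sum_add_distrib,
      ← Finset.sum_add_distrib]
    refine Finset.sum_le_sum fun e he => ?_
    simp only [Finset.empty_subset, if_true]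
    have hn1 : 0 ≤ ∑ z ∈ Z, (if {z} ⊆ e then H e else 0) :=
      Finset.sum_nonneg fun z _ => by split_ifs; exacts [hH e, le_rfl]
    have hn2 : 0 ≤ ∑ σ ∈ X.powerset with Sat X p B G σ, (if σ ⊆ e then H e else 0) :=
      Finset.sum_nonneg fun z _ => by split_ifs; exacts [hH e, le_rfl]
    unfold cur
    split_ifs with hc
    · linarith
    · rw [not_and_or] at hc
      rcases hc with hc | hc
      · rw [Finset.not_disjoint_iff] at hc
        obtain ⟨z, hz1, hz2⟩ := hc
        have : H e ≤ ∑ z ∈ Z, (if {z} ⊆ e then H e else 0) := by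
          refine le_trans ?_ (Finset.single_le_sum (f := fun z => if {z} ⊆ e then H e else 0)
            (fun z _ => by split_ifs; exacts [hH e, le_rfl]) hz2)
          simp [hz1]
        linarith
      · push Not at hc
        obtain ⟨σ, hσ1, hσ2⟩ := hc
        have : H e ≤ ∑ σ ∈ X.powerset with Sat X p B G σ, (if σ ⊆ e then H e else 0) := by
          refine le_trans ?_ (Finset.single_le_sum (f := fun σ => if σ ⊆ e then H e else 0)
            (fun z _ => by split_ifs; exacts [hH e, le_rfl])
            (Finset.mem_filter.2 ⟨Finset.mem_powerset.2
              (hσ1.trans (Finset.mem_powerset.1 he)), hσ2⟩))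
          simp [hσ1]
        linarith
  have h2 : ∑ z ∈ Z, deg X H {z} ≤ Z.card * B := by
    have := Finset.sum_le_card_nsmul Z (fun z => deg X H {z}) B (fun z _ => by
      have := hB {z} (Finset.singleton_nonempty z)
      simpa using this)
    simpa using this
  have h3 : ∑ σ ∈ X.powerset with Sat X p B G σ, deg X H σ ≤ 2 ^ r * deg X G ∅ := by
    refine le_trans ?_ (sum_deg_le X C r G hG)
    refine le_trans (Finset.sum_le_sum (g := fun σ => deg X G σ) fun σ hσ => ?_) ?_
    · have hs := (Finset.mem_filter.1 hσ).2
      exact (hB σ hs.1).trans hs.2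
    · exact Finset.sum_le_sum_of_subset_of_nonneg (Finset.filter_subset _ _)
        fun σ _ _ => deg_nonneg hG.1 σ
  linarith

end SzRandom

end C1

section C2
namespace SzRandom

/-- conclusion of the container step -/
def Contains (C Z : Finset ℕ) (x s : ℝ) (R S : Finset ℕ → Finset ℕ) (I : Finset ℕ) : Prop :=
  (∀ u ∈ I, u ∈ C → u ∉ Z → u ∈ R I ∪ S I) ∧ R I ⊆ C ∧ ((R I).card : ℝ) + x ≤ C.card ∧
    ((S I).card : ℝ) ≤ s

lemma inner (X C : Finset ℕ) (p B β β' c b : ℝ) (r : ℕ) (hCX : C ⊆ X) (hX : 0 < X.card)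
    (hp : 0 < p) (hB : 0 < B) (hβ : 0 < β) (hb : 0 ≤ b)
    (hc1 : c * B ≤ β / 4) (hβ' : 2 ^ r * β' ≤ β / 4)
    (H : Finset ℕ → ℝ) (hH : HG C (r + 1) H) (hHt : β * X.card ≤ deg X H ∅)
    (hHB : DegB X p B H)
    (hIH : ∀ G, HG C r G → β' * X.card ≤ deg X G ∅ → DegB X p (2 * B) G →
      ∃ R S, Cons R S ∧ ∀ I, Indep G I → Contains C ∅ (c * X.card) b R S I) :
    ∀ (q : ℕ) (Z : Finset ℕ) (G : Finset ℕ → ℝ), Z ⊆ C → HG C r G → DegB X p (2 * B) G →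
      deg X G ∅ ≤ β' * X.card + B / p → c * X.card ≤ Z.card + q → (Z.card + q : ℝ) < c * X.card + 1 →
      ∃ R S, Cons R S ∧ ∀ I, Indep H I → Indep G I → Contains C Z (c * X.card)
        ((β' * X.card + B / p - deg X G ∅) * (2 * p / β) + b) R S I := by
  intro q
  induction q with
  | zero =>
    intro Z G hZ hG hGB hGt hq1 hq2
    refine ⟨_, _, Cons.const (C \ Z), fun I hI hIG => ⟨?_, Finset.sdiff_subset, ?_, ?_⟩⟩
    · intro u _ hu1 hu2
      simp [hu1, hu2]
    · have h1 := Finset.card_sdiff_add_card_eq_card hZ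
      have h2 : ((C \ Z).card : ℝ) + Z.card = C.card := by exact_mod_cast h1
      simp only [Nat.cast_zero, add_zero] at hq1
      linarith
    · simp only [Finset.card_empty, Nat.cast_zero]
      have : 0 ≤ (β' * X.card + B / p - deg X G ∅) * (2 * p / β) :=
        mul_nonneg (by linarith) (by positivity)
      linarith
  | succ q ih =>
    intro Z G hZ hG hGB hGt hq1 hq2
    by_cases hbig : β' * X.card ≤ deg X G ∅
    · obtain ⟨R, S, hRS, h⟩ := hIH G hG hbig hGB
      refine ⟨R, S, hRS, fun I _ hI => ?_⟩
      obtain ⟨h1, h2, h3, h4⟩ := h I hI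
      refine ⟨fun u hu1 hu2 _ => h1 u hu1 hu2 (by simp), h2, h3, h4.trans ?_⟩
      have : 0 ≤ (β' * X.card + B / p - deg X G ∅) * (2 * p / β) :=
        mul_nonneg (by linarith) (by positivity)
      linarith
    push Not at hbig
    have hXr : (0:ℝ) < X.card := by exact_mod_cast hX
    set W := cur X p B H G Z with hW
    have hWn : ∀ e, 0 ≤ W e := cur_nonneg hH.1
    have hWle : ∀ e, W e ≤ H e := cur_le hH.1
    have hWne : ∀ e, W e ≠ 0 → H e ≠ 0 ∧ Disjoint e Z ∧ ∀ σ ⊆ e, ¬ Sat X p B G σ := by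
      intro e he
      rw [hW] at he
      unfold cur at he
      split_ifs at he with h
      · exact ⟨he, h⟩
      · exact absurd rfl he
    have hWHG : HG C (r + 1) W := ⟨hWn, fun e he => hH.2 e (hWne e he).1⟩
    have hWt : β / 2 * X.card ≤ deg X W ∅ := by
      have h1 := cur_total X C p B r H G Z hH.1 hHB hG
      rw [← hW] at h1
      push_cast at hq2
      have h2 : (Z.card : ℝ) ≤ c * X.card := by
        have : (0:ℝ) ≤ q := Nat.cast_nonneg q
        linarith
      have h3 : (Z.card : ℝ) * B ≤ β / 4 * X.card := by
        calc (Z.card : ℝ) * B ≤ c * X.card * B := mul_le_mul_of_nonneg_right h2 hB.le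
          _ = c * B * X.card := by ring
          _ ≤ _ := mul_le_mul_of_nonneg_right hc1 hXr.le
      have h4 : (2:ℝ) ^ r * deg X G ∅ ≤ β / 4 * X.card := by
        calc (2:ℝ) ^ r * deg X G ∅ ≤ 2 ^ r * (β' * X.card) :=
              mul_le_mul_of_nonneg_left hbig.le (by positivity)
          _ = 2 ^ r * β' * X.card := by ring
          _ ≤ _ := mul_le_mul_of_nonneg_right hβ' hXr.le
      linarith
    obtain ⟨v, hvX, hv⟩ := exists_popular X C r W hWHG (β / 2) hX hWt
    obtain ⟨hvC, hvZ⟩ : v ∈ C ∧ v ∉ Z := by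
      have h1 : deg X W {v} ≠ 0 := (lt_of_lt_of_le (by positivity) hv).ne'
      obtain ⟨e, -, he⟩ := Finset.exists_ne_zero_of_sum_ne_zero h1
      have hve : {v} ⊆ e := by
        by_contra h
        exact he (if_neg h)
      rw [if_pos hve] at he
      have hve' : v ∈ e := Finset.singleton_subset_iff.1 hve
      exact ⟨(hWHG.2 e he).1 hve', Finset.disjoint_left.1 (hWne e he).2.1 hve'⟩
    have hZ' : insert v Z ⊆ C := Finset.insert_subset hvC hZ
    have hZc : (insert v Z).card = Z.card + 1 := Finset.card_insert_of_notMem hvZ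
    set G' : Finset ℕ → ℝ := fun f => G f + p⁻¹ * link W v f with hG'
    have hlink0 : ∀ f, 0 ≤ link W v f := by
      intro f; unfold link; split_ifs; exacts [le_rfl, hWn _]
    have hG'HG : HG C r G' := by
      refine ⟨fun f => ?_, fun f hf => ?_⟩
      · have := hG.1 f
        have := hlink0 f
        simp only [hG']; positivity
      · by_cases h0 : G f = 0
        · have h1 : link W v f ≠ 0 := by
            intro h; apply hf; simp [hG', h0, h]
          unfold link at h1
          split_ifs at h1 with h2
          · exact absurd rfl h1
          · obtain ⟨h3, h4⟩ := hWHG.2 _ h1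
            rw [Finset.card_insert_of_notMem h2] at h4
            exact ⟨(Finset.subset_insert _ _).trans h3, by omega⟩
        · exact hG.2 f h0
    have hdeg0 : deg X G' ∅ = deg X G ∅ + p⁻¹ * deg X W {v} := by
      rw [hG', deg_add, deg_link X W v hvX ∅ (by simp)]
      rfl
    have hG'B : DegB X p (2 * B) G' := by
      intro σ hσ
      rw [hG', deg_add]
      by_cases hvσ : v ∈ σ
      · rw [deg_link_mem X W v σ hvσ, mul_zero, add_zero]
        exact hGB σ hσ
      rw [deg_link X W v hvX σ hvσ]
      by_cases hsat : Sat X p B G σ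
      · have : deg X W (insert v σ) = 0 := by
          refine Finset.sum_eq_zero fun e _ => ?_
          split_ifs with h
          · by_contra hne
            exact (hWne e hne).2.2 σ ((Finset.subset_insert _ _).trans h) hsat
          · rfl
        rw [this, mul_zero, add_zero]
        exact hGB σ hσ
      · have h1 : deg X G σ ≤ B * p ^ (σ.card - 1) := by
          by_contra! hc
          exact hsat ⟨hσ, hc.le⟩
        have h2 : deg X W (insert v σ) ≤ B * p ^ σ.card := by
          have h3 := (deg_mono (X := X) hWle (insert v σ)).trans
            (hHB _ (Finset.insert_nonempty v σ))
          rwa [Finset.card_insert_of_notMem hvσ, Nat.add_sub_cancel] at h3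
        have h3 : p⁻¹ * deg X W (insert v σ) ≤ B * p ^ (σ.card - 1) := by
          rw [inv_mul_le_iff₀ hp]
          refine h2.trans (le_of_eq ?_)
          have : 0 < σ.card := Finset.card_pos.2 hσ
          obtain ⟨s, hs⟩ : ∃ s, σ.card = s + 1 := ⟨σ.card - 1, by omega⟩
          rw [hs, Nat.add_sub_cancel, pow_succ]
          ring
        linarith
    have hvB : deg X W {v} ≤ B := by
      have h3 := (deg_mono (X := X) hWle {v}).trans (hHB _ (Finset.singleton_nonempty v))
      simpa using h3
    obtain ⟨R1, S1, hRS1, h1⟩ := ih (insert v Z) G' hZ' hG'HG hG'B (by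
      rw [hdeg0]
      have : p⁻¹ * deg X W {v} ≤ B / p := by
        rw [inv_mul_le_iff₀ hp, mul_div_cancel₀ _ hp.ne']; exact hvB
      linarith) (by rw [hZc]; push_cast at hq1 ⊢; linarith) (by
        rw [hZc]; push_cast at hq2 ⊢; linarith)
    obtain ⟨R2, S2, hRS2, h2⟩ := ih (insert v Z) G hZ' hG hGB hGt
      (by rw [hZc]; push_cast at hq1 ⊢; linarith) (by
        rw [hZc]; push_cast at hq2 ⊢; linarith)
    refine ⟨_, _, hRS1.node hRS2 v, fun I hI hIG => ?_⟩
    by_cases hvI : v ∈ I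
    · have hIG' : Indep G' I := by
        intro f hf
        simp only [hG']
        rw [hIG f hf]
        have : link W v f = 0 := by
          unfold link
          split_ifs with h
          · rfl
          · have h3 := hI _ (Finset.insert_subset hvI hf)
            exact le_antisymm ((hWle _).trans h3.le) (hWn _)
        simp [this]
      obtain ⟨h3, h4, h5, h6⟩ := h1 I hI hIG'
      unfold Contains
      simp only [hvI, if_true]
      refine ⟨fun u hu1 hu2 hu3 => ?_, h4, h5, ?_⟩
      · by_cases huv : u = v
        · simp [huv]
        · have := h3 u hu1 hu2 (by simp [huv, hu3])
          rw [Finset.mem_union] at this ⊢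
          rcases this with h | h
          · exact Or.inl h
          · exact Or.inr (Finset.mem_insert_of_mem h)
      · have h7 : ((insert v (S1 I)).card : ℝ) ≤ (S1 I).card + 1 := by
          exact_mod_cast Finset.card_insert_le _ _
        rw [hdeg0] at h6
        have h8 : 1 ≤ p⁻¹ * deg X W {v} * (2 * p / β) := by
          have : p⁻¹ * deg X W {v} * (2 * p / β) = deg X W {v} / (β / 2) := by field_simp
          rw [this, le_div_iff₀ (by positivity)]
          linarith
        nlinarith
    · obtain ⟨h3, h4, h5, h6⟩ := h2 I hI hIG
      unfold Contains
      simp only [hvI, if_false]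
      refine ⟨fun u hu1 hu2 hu3 => h3 u hu1 hu2 ?_, h4, h5, h6⟩
      simp only [Finset.mem_insert, not_or]
      exact ⟨fun h => hvI (h ▸ hu1), hu3⟩

lemma level (r : ℕ) : ∀ β B : ℝ, 0 < β → 0 < B → ∃ c b : ℝ, 0 < c ∧ 0 < b ∧
    ∀ (X C : Finset ℕ) (p : ℝ), C ⊆ X → 0 < p → 1 ≤ p * X.card → ∀ H, HG C r H →
      β * X.card ≤ deg X H ∅ → DegB X p B H →
      ∃ R S, Cons R S ∧ ∀ I, Indep H I → Contains C ∅ (c * X.card) (b * (p * X.card)) R S I := by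
  induction r with
  | zero =>
    intro β B hβ hB
    refine ⟨1, 1, one_pos, one_pos, fun X C p hC hp hpX H hH hHt hHB => ?_⟩
    refine ⟨_, _, Cons.const ∅, fun I hI => ?_⟩
    exfalso
    have hX : (0:ℝ) < X.card := by
      by_contra! h
      nlinarith
    have h1 : deg X H ∅ = 0 := by
      refine Finset.sum_eq_zero fun e _ => ?_
      rw [if_pos (Finset.empty_subset e)]
      by_contra hne
      have := (hH.2 e hne).2
      rw [Finset.card_eq_zero] at this
      rw [this] at hne
      exact hne (hI ∅ (Finset.empty_subset I))
    rw [h1] at hHt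
    nlinarith
  | succ r ih =>
    intro β B hβ hB
    set β' := β / 4 / 2 ^ r with hβ'
    have hβ'p : 0 < β' := by positivity
    obtain ⟨c0, b0, hc0, hb0, h0⟩ := ih β' (2 * B) hβ'p (by positivity)
    set c := min c0 (β / 4 / B) with hc
    have hcp : 0 < c := by positivity
    refine ⟨c, (β' + B) * (2 / β) + b0, hcp, by positivity,
      fun X C p hC hp hpX H hH hHt hHB => ?_⟩
    have hX : (0:ℝ) < X.card := by
      by_contra! h
      nlinarith
    have hXn : 0 < X.card := by exact_mod_cast hX
    have hzero : ∀ σ, deg X (fun _ => 0) σ = 0 := fun σ => by simp [deg]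
    obtain ⟨R, S, hRS, h⟩ := inner X C p B β β' c (b0 * (p * X.card)) r hC hXn hp hB hβ
      (by positivity) (by
        have h1 : c ≤ β / 4 / B := min_le_right _ _
        rwa [le_div_iff₀ hB] at h1) (by rw [hβ']; exact le_of_eq (by field_simp)) H hH hHt hHB
      (fun G hG hGt hGB => by
        obtain ⟨R, S, hRS, h⟩ := h0 X C p hC hp hpX G hG hGt hGB
        refine ⟨R, S, hRS, fun I hI => ?_⟩
        obtain ⟨h1, h2, h3, h4⟩ := h I hI
        refine ⟨h1, h2, ?_, h4⟩
        have h5 : c * X.card ≤ c0 * X.card :=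
          mul_le_mul_of_nonneg_right (min_le_left _ _) hX.le
        linarith) ⌈c * X.card⌉₊ ∅ (fun _ => 0) (Finset.empty_subset _)
      ⟨fun _ => le_rfl, fun _ h => absurd rfl h⟩ (by
        intro σ _
        rw [hzero]; positivity) (by rw [hzero]; positivity) (by
        simpa using Nat.le_ceil (c * X.card)) (by
        simpa using Nat.ceil_lt_add_one (show 0 ≤ c * (X.card : ℝ) by positivity))
    refine ⟨R, S, hRS, fun I hI => ?_⟩
    obtain ⟨h1, h2, h3, h4⟩ := h I hI (fun _ _ => rfl)
    refine ⟨h1, h2, h3, h4.trans ?_⟩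
    rw [hzero]
    have h5 : (β' * X.card + B / p - 0) * (2 * p / β) =
        β' * (2 / β) * (p * X.card) + B * (2 / β) * 1 := by field_simp; ring
    rw [h5]
    have h6 : B * (2 / β) * 1 ≤ B * (2 / β) * (p * X.card) :=
      mul_le_mul_of_nonneg_left hpX (by positivity)
    linarith

end SzRandom

end C2

section C3
namespace SzRandom

/-- the set of elements of a progression -/
def apSet (k : ℕ) (q : ℕ × ℕ) : Finset ℕ := (Finset.range k).image fun i => q.1 + i * q.2

/-- weighted hypergraph of progressions -/
noncomputable def apH (n k : ℕ) (C : Finset ℕ) (e : Finset ℕ) : ℝ :=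
  (n : ℝ)⁻¹ * ∑ q ∈ apPairs n k C, if apSet k q = e then 1 else 0

/-- progression-free sets -/
def APFree (k : ℕ) (I : Finset ℕ) : Prop := ¬ ∃ a d : ℕ, 0 < a ∧ 0 < d ∧ ∀ i < k, a + i * d ∈ I

lemma apPairs_spec {n k : ℕ} {C : Finset ℕ} {q : ℕ × ℕ} (h : q ∈ apPairs n k C) :
    0 < q.1 ∧ 0 < q.2 ∧ (∀ i < k, q.1 + i * q.2 ∈ C) ∧ q.2 ≤ n := by
  unfold apPairs at h
  simp only [Finset.mem_filter, Finset.mem_product, Finset.mem_Icc] at h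
  exact ⟨h.1.1.1, h.1.2.1, h.2, h.1.2.2⟩

lemma apSet_sub {n k : ℕ} {C : Finset ℕ} {q : ℕ × ℕ} (h : q ∈ apPairs n k C) : apSet k q ⊆ C := by
  intro x hx
  obtain ⟨i, hi, rfl⟩ := Finset.mem_image.1 hx
  exact (apPairs_spec h).2.2.1 i (Finset.mem_range.1 hi)

lemma apSet_card {n k : ℕ} {C : Finset ℕ} {q : ℕ × ℕ} (h : q ∈ apPairs n k C) :
    (apSet k q).card = k := by
  unfold apSet
  rw [Finset.card_image_of_injective, Finset.card_range]
  intro i j hij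
  simp only at hij
  exact Nat.eq_of_mul_eq_mul_right (apPairs_spec h).2.1 (by omega)

lemma apH_ne {n k : ℕ} {C e : Finset ℕ} (h : apH n k C e ≠ 0) : ∃ q ∈ apPairs n k C, apSet k q = e := by
  by_contra! hc
  apply h
  unfold apH
  rw [Finset.sum_eq_zero, mul_zero]
  intro q hq
  exact if_neg (hc q hq)

lemma apH_HG (n k : ℕ) (C : Finset ℕ) : HG C k (apH n k C) := by
  refine ⟨fun e => ?_, fun e he => ?_⟩
  · unfold apH
    refine mul_nonneg (by positivity) (Finset.sum_nonneg fun q _ => ?_)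
    split_ifs <;> norm_num
  · obtain ⟨q, hq, rfl⟩ := apH_ne he
    exact ⟨apSet_sub hq, apSet_card hq⟩

lemma apH_deg (n k : ℕ) (X C : Finset ℕ) (hC : C ⊆ X) (σ : Finset ℕ) :
    deg X (apH n k C) σ = (n : ℝ)⁻¹ * ((apPairs n k C).filter fun q => σ ⊆ apSet k q).card := by
  have h1 : deg X (apH n k C) σ = (n : ℝ)⁻¹ * ∑ q ∈ apPairs n k C, ∑ e ∈ X.powerset,
      (if apSet k q = e then (if σ ⊆ e then (1:ℝ) else 0) else 0) := by
    rw [Finset.sum_comm, Finset.mul_sum]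
    refine Finset.sum_congr rfl fun e _ => ?_
    unfold apH
    split_ifs with h
    · rfl
    · simp
  rw [h1, Finset.card_filter]
  push_cast
  congr 1
  refine Finset.sum_congr rfl fun q hq => ?_
  rw [Finset.sum_ite_eq, if_pos (Finset.mem_powerset.2 ((apSet_sub hq).trans hC))]

lemma count_one (n k : ℕ) (C : Finset ℕ) (v : ℕ) :
    ((apPairs n k C).filter fun q => v ∈ apSet k q).card ≤ k * n := by
  have hex : ∀ q : ℕ × ℕ, ∃ i, v ∈ apSet k q → i < k ∧ q.1 + i * q.2 = v := by
    intro q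
    by_cases h : v ∈ apSet k q
    · obtain ⟨i, hi, h2⟩ := Finset.mem_image.1 h
      exact ⟨i, fun _ => ⟨Finset.mem_range.1 hi, h2⟩⟩
    · exact ⟨0, fun h' => absurd h' h⟩
  choose f hf using hex
  have : ((apPairs n k C).filter fun q => v ∈ apSet k q).card ≤
      (Finset.range k ×ˢ Finset.Icc 1 n).card := by
    refine Finset.card_le_card_of_injOn (fun q => (f q, q.2)) ?_ ?_
    · intro q hq
      have hq := Finset.mem_filter.1 hq
      have h1 := apPairs_spec hq.1
      have h2 := hf q hq.2
      simp only [Finset.coe_product, Set.mem_prod, Finset.mem_coe, Finset.mem_range, Finset.mem_Icc]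
      exact ⟨h2.1, h1.2.1, h1.2.2.2⟩
    · intro q hq r hr h
      have hq := Finset.mem_filter.1 hq
      have hr := Finset.mem_filter.1 hr
      have h2 := hf q hq.2
      have h3 := hf r hr.2
      simp only [Prod.mk.injEq] at h
      rw [h.1, h.2] at h2
      exact Prod.ext (by omega) h.2
  simpa using this

lemma count_two (n k : ℕ) (C : Finset ℕ) (u v : ℕ) (huv : u < v) :
    ((apPairs n k C).filter fun q => u ∈ apSet k q ∧ v ∈ apSet k q).card ≤ k * k := by
  have hex : ∀ (w : ℕ) (q : ℕ × ℕ), ∃ i, w ∈ apSet k q → i < k ∧ q.1 + i * q.2 = w := by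
    intro w q
    by_cases h : w ∈ apSet k q
    · obtain ⟨i, hi, h2⟩ := Finset.mem_image.1 h
      exact ⟨i, fun _ => ⟨Finset.mem_range.1 hi, h2⟩⟩
    · exact ⟨0, fun h' => absurd h' h⟩
  choose f hf using hex
  have : ((apPairs n k C).filter fun q => u ∈ apSet k q ∧ v ∈ apSet k q).card ≤
      (Finset.range k ×ˢ Finset.range k).card := by
    refine Finset.card_le_card_of_injOn (fun q => (f u q, f v q)) ?_ ?_
    · intro q hq
      have hq := Finset.mem_filter.1 hq
      simp only [Finset.coe_product, Set.mem_prod, Finset.mem_coe, Finset.mem_range]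
      exact ⟨(hf u q hq.2.1).1, (hf v q hq.2.2).1⟩
    · intro q hq r hr h
      have hq := Finset.mem_filter.1 hq
      have hr := Finset.mem_filter.1 hr
      have h1 := (hf u q hq.2.1).2
      have h2 := (hf v q hq.2.2).2
      have h3 := (hf u r hr.2.1).2
      have h4 := (hf v r hr.2.2).2
      simp only [Prod.mk.injEq] at h
      rw [← h.1] at h3
      rw [← h.2] at h4
      generalize f u q = i at *
      generalize f v q = j at *
      have hij : i < j := by
        by_contra! hc
        have := Nat.mul_le_mul_right q.2 hc
        omega
      obtain ⟨t, rfl⟩ := Nat.exists_eq_add_of_lt hij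
      have h5 : (t + 1) * q.2 = (t + 1) * r.2 := by
        have e1 : (i + t + 1) * q.2 = i * q.2 + (t + 1) * q.2 := by ring
        have e2 : (i + t + 1) * r.2 = i * r.2 + (t + 1) * r.2 := by ring
        omega
      have h6 : q.2 = r.2 := Nat.eq_of_mul_eq_mul_left (by omega) h5
      rw [h6] at h1
      exact Prod.ext (by omega) h6
  simpa using this

lemma apH_degB (n K : ℕ) (C : Finset ℕ) (hC : C ⊆ Finset.Icc 1 n) (p : ℝ)
    (hp : 0 < p) (hp1 : p ≤ 1) (hpn : p ^ K * n = 1) :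
    DegB (Finset.Icc 1 n) p (((K : ℝ) + 1) ^ 2) (apH n (K + 1) C) := by
  intro σ hσ
  rw [apH_deg n (K + 1) _ C hC]
  have hn : (n : ℝ) ≠ 0 := by
    intro h; rw [h] at hpn; simp at hpn
  have hn0 : (0 : ℝ) < n := lt_of_le_of_ne (Nat.cast_nonneg n) hn.symm
  have hninv : (n : ℝ)⁻¹ = p ^ K :=
    (eq_inv_of_mul_eq_one_left hpn).symm
  rcases Nat.lt_or_ge 1 σ.card with h1 | h1
  · by_cases hbig : K + 1 < σ.card
    · have : ((apPairs n (K + 1) C).filter fun q => σ ⊆ apSet (K + 1) q) = ∅ := by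
        rw [Finset.filter_eq_empty_iff]
        intro q hq hsub
        have := Finset.card_le_card hsub
        rw [apSet_card hq] at this
        omega
      rw [this]
      simp only [Finset.card_empty, Nat.cast_zero, mul_zero]
      positivity
    · obtain ⟨a, ha, b, hb, hab⟩ := Finset.one_lt_card.1 h1
      obtain ⟨u, hu, v, hv, huv⟩ : ∃ u ∈ σ, ∃ v ∈ σ, u < v := by
        rcases lt_or_gt_of_ne hab with h | h
        · exact ⟨a, ha, b, hb, h⟩
        · exact ⟨b, hb, a, ha, h⟩
      have h2 : ((apPairs n (K + 1) C).filter fun q => σ ⊆ apSet (K + 1) q).card ≤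
          (K + 1) * (K + 1) := by
        refine le_trans (Finset.card_le_card ?_) (count_two n (K + 1) C u v huv)
        exact Finset.monotone_filter_right _ fun q _ hq => ⟨hq hu, hq hv⟩
      have h3 : (((apPairs n (K + 1) C).filter fun q => σ ⊆ apSet (K + 1) q).card : ℝ) ≤
          ((K : ℝ) + 1) ^ 2 := by
        rw [sq]; exact_mod_cast h2
      have h4 : p ^ K ≤ p ^ (σ.card - 1) := pow_le_pow_of_le_one hp.le hp1 (by omega)
      rw [hninv, mul_comm]
      exact mul_le_mul h3 h4 (by positivity) (by positivity)
  · have hc1 : σ.card = 1 := by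
      have := Finset.card_pos.2 hσ
      omega
    obtain ⟨v, rfl⟩ := Finset.card_eq_one.1 hc1
    simp only [Finset.singleton_subset_iff, Finset.card_singleton, Nat.sub_self, pow_zero, mul_one]
    rw [inv_mul_le_iff₀ hn0]
    have h2 := count_one n (K + 1) C v
    have h3 : (((apPairs n (K + 1) C).filter fun q => v ∈ apSet (K + 1) q).card : ℝ) ≤
        ((K : ℝ) + 1) * n := by exact_mod_cast h2
    refine h3.trans ?_
    have h4 : (0:ℝ) ≤ K := Nat.cast_nonneg K
    nlinarith [mul_nonneg hn0.le h4]

lemma apH_indep (n k : ℕ) (C I : Finset ℕ) (hI : APFree k I) : Indep (apH n k C) I := by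
  intro e he
  by_contra hne
  obtain ⟨q, hq, rfl⟩ := apH_ne hne
  have h := apPairs_spec hq
  refine hI ⟨q.1, q.2, h.1, h.2.1, fun i hi => he ?_⟩
  exact Finset.mem_image.2 ⟨i, Finset.mem_range.2 hi, rfl⟩

theorem containers (K : ℕ) (hK : 1 ≤ K) (δ : ℝ) (hδ : 0 < δ) : ∃ (M : ℝ) (n0 : ℕ), 0 < M ∧ ∀ n ≥ n0,
    ∀ p : ℝ, 0 < p → p ≤ 1 → p ^ K * n = 1 → ∃ R S, Cons R S ∧ ∀ I ⊆ Finset.Icc 1 n,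
      APFree (K + 1) I → I ⊆ R I ∪ S I ∧ ((R I).card : ℝ) ≤ δ * n ∧ ((S I).card : ℝ) ≤ M * (p * n) := by
  obtain ⟨β, hβ, n0, hV⟩ := varnavides K δ hδ
  obtain ⟨c, b, hc, hb, hlev⟩ := level (K + 1) β (((K : ℝ) + 1) ^ 2) hβ (by positivity)
  set J := ⌈1 / c⌉₊ + 1 with hJ
  refine ⟨J * b, n0, by positivity, fun n hn p hp hp1 hpn => ?_⟩
  have hn' : (n : ℝ) ≠ 0 := by
    intro h; rw [h] at hpn; simp at hpn
  have hn0 : (0 : ℝ) < n := lt_of_le_of_ne (Nat.cast_nonneg n) hn'.symm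
  have hX : ((Finset.Icc 1 n).card : ℝ) = n := by simp
  have hpn1 : 1 ≤ p * n := by
    rw [← hpn]
    refine mul_le_mul_of_nonneg_right ?_ hn0.le
    simpa using pow_le_pow_of_le_one hp.le hp1 hK
  have htree : ∀ F : Finset ℕ, ∃ R S, Cons R S ∧ ∀ I, I ⊆ Finset.Icc 1 n → APFree (K + 1) I →
      F ⊆ Finset.Icc 1 n →
      (∀ u ∈ I, u ∈ F → u ∈ R I ∪ S I) ∧ R I ⊆ F ∧ ((S I).card : ℝ) ≤ b * (p * n) ∧
      (((F.card : ℝ) ≤ δ * n ∧ R I = F) ∨ ((R I).card : ℝ) + c * n ≤ F.card) := by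
    intro F
    by_cases hF : F ⊆ Finset.Icc 1 n ∧ δ * n ≤ F.card
    · obtain ⟨hF1, hF2⟩ := hF
      have h1 := hV n hn F hF1 hF2
      obtain ⟨R, S, hRS, h⟩ := hlev (Finset.Icc 1 n) F p hF1 hp (by rw [hX]; exact hpn1)
        (apH n (K + 1) F) (apH_HG _ _ _) (by
          rw [apH_deg n (K + 1) _ F hF1, hX]
          simp only [Finset.empty_subset, Finset.filter_true]
          rw [le_inv_mul_iff₀ hn0]
          linarith [show n * (β * n) = β * (n:ℝ) ^ 2 by ring]) (apH_degB n K F hF1 p hp hp1 hpn)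
      refine ⟨R, S, hRS, fun I _ hI _ => ?_⟩
      obtain ⟨h2, h3, h4, h5⟩ := h I (apH_indep _ _ _ _ hI)
      rw [hX] at h4 h5
      exact ⟨fun u hu1 hu2 => h2 u hu1 hu2 (by simp), h3, h5, Or.inr h4⟩
    · refine ⟨_, _, Cons.const F, fun I _ _ hF1 => ⟨fun u _ hu => by simp [hu], subset_rfl, ?_, ?_⟩⟩
      · simp only [Finset.card_empty, Nat.cast_zero]; positivity
      · left
        refine ⟨?_, rfl⟩
        by_contra! h
        exact hF ⟨hF1, h.le⟩
  choose R2 S2 hRS2 h2 using htree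
  have hiter : ∀ j : ℕ, ∃ R S, Cons R S ∧ ∀ I ⊆ Finset.Icc 1 n,
      APFree (K + 1) I → I ⊆ R I ∪ S I ∧ R I ⊆ Finset.Icc 1 n ∧
        ((S I).card : ℝ) ≤ j * b * (p * n) ∧
        (((R I).card : ℝ) ≤ δ * n ∨ ((R I).card : ℝ) + j * (c * n) ≤ n) := by
    intro j
    induction j with
    | zero =>
      refine ⟨_, _, Cons.const (Finset.Icc 1 n), fun I hI _ => ⟨?_, subset_rfl, ?_, ?_⟩⟩
      · simpa using hI
      · simp
      · right; simp
    | succ j ih =>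
      obtain ⟨R1, S1, hRS1, h1⟩ := ih
      refine ⟨_, _, hRS1.bind hRS2, fun I hI hAP => ?_⟩
      obtain ⟨a1, a2, a3, a4⟩ := h1 I hI hAP
      obtain ⟨b1, b2, b3, b4⟩ := h2 (R1 I) I hI hAP a2
      refine ⟨?_, b2.trans a2, ?_, ?_⟩
      · intro u hu
        have h3 := a1 hu
        rw [Finset.mem_union] at h3
        rcases h3 with h3 | h3
        · have := b1 u hu h3
          simp only [Finset.mem_union] at this ⊢
          tauto
        · simp only [Finset.mem_union]
          tauto
      · have h3 : ((S1 I ∪ S2 (R1 I) I).card : ℝ) ≤ (S1 I).card + (S2 (R1 I) I).card := by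
          exact_mod_cast Finset.card_union_le _ _
        push_cast
        linarith
      · rcases b4 with ⟨b5, b6⟩ | b4
        · left; simp only [b6]; exact b5
        · rcases a4 with a4 | a4
          · left
            have : 0 < c * n := by positivity
            linarith
          · right
            push_cast
            linarith
  obtain ⟨R, S, hRS, h⟩ := hiter J
  refine ⟨R, S, hRS, fun I hI hAP => ?_⟩
  obtain ⟨a1, a2, a3, a4⟩ := h I hI hAP
  refine ⟨a1, ?_, a3⟩
  rcases a4 with a4 | a4
  · exact a4
  · exfalso
    have h3 : 1 / c < J := by
      rw [hJ]; push_cast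
      linarith [Nat.le_ceil (1 / c)]
    rw [div_lt_iff₀ hc] at h3
    have h4 : (0:ℝ) ≤ (R I).card := Nat.cast_nonneg _
    nlinarith

end SzRandom

end C3

namespace SzRandom

theorem prob_gen (n : ℕ) (p x : ℝ) (S T : Finset ℕ) (hS : S ⊆ Finset.Icc 1 n)
    (hT : T ⊆ Finset.Icc 1 n) (hST : Disjoint S T) :
    ∑ A ∈ (Finset.Icc 1 n).powerset, (p ^ A.card * (1 - p) ^ (n - A.card)) *
      (if S ⊆ A then x ^ (A ∩ T).card else 0) = p ^ S.card * (1 + (x - 1) * p) ^ T.card := by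
  have h := Finset.prod_add (fun i => p * (if i ∈ T then x else 1))
    (fun i => if i ∈ S then 0 else (1 - p)) (Finset.Icc 1 n)
  have h2 : ∏ i ∈ Finset.Icc 1 n, (p * (if i ∈ T then x else 1) + (if i ∈ S then 0 else (1 - p)))
      = p ^ S.card * (1 + (x - 1) * p) ^ T.card := by
    have e : ∀ i ∈ Finset.Icc 1 n,
        (p * (if i ∈ T then x else 1) + (if i ∈ S then 0 else (1 - p)))
        = (if i ∈ S then p else 1) * (if i ∈ T then (1 + (x - 1) * p) else 1) := by
      intro i _
      by_cases h1 : i ∈ S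
      · have h2 : i ∉ T := Finset.disjoint_left.1 hST h1
        simp [h1, h2]
      · by_cases h2 : i ∈ T
        · simp [h1, h2]; ring
        · simp [h1, h2]
    rw [Finset.prod_congr rfl e, Finset.prod_mul_distrib, Finset.prod_ite_mem,
      Finset.prod_ite_mem, Finset.inter_eq_right.2 hS, Finset.inter_eq_right.2 hT]
    simp
  rw [← h2, h]
  apply Finset.sum_congr rfl
  intro A hA
  rw [Finset.mem_powerset] at hA
  rw [Finset.prod_mul_distrib, Finset.prod_ite_mem]
  simp only [Finset.prod_const]
  by_cases hSA : S ⊆ A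
  · have e : ∏ i ∈ Finset.Icc 1 n \ A, (if i ∈ S then (0 : ℝ) else 1 - p)
        = (1 - p) ^ (n - A.card) := by
      rw [Finset.prod_congr rfl (g := fun _ => 1 - p)]
      · rw [Finset.prod_const, Finset.card_sdiff_of_subset hA]; simp
      · intro i hi
        rw [Finset.mem_sdiff] at hi
        rw [if_neg (fun h => hi.2 (hSA h))]
    rw [if_pos hSA, e]; ring
  · rw [if_neg hSA]
    obtain ⟨i, hi, hi2⟩ := Finset.not_subset.1 hSA
    have e : ∏ i ∈ Finset.Icc 1 n \ A, (if i ∈ S then (0 : ℝ) else 1 - p) = 0 := by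
      apply Finset.prod_eq_zero (i := i)
      · exact Finset.mem_sdiff.2 ⟨hS hi, hi2⟩
      · simp [hi]
    rw [e]; simp

theorem prob_total (n : ℕ) (p : ℝ) :
    ∑ A ∈ (Finset.Icc 1 n).powerset, (p ^ A.card * (1 - p) ^ (n - A.card)) = 1 := by
  have := prob_gen n p 1 ∅ ∅ (by simp) (by simp) (by simp)
  simpa using this

theorem prob_half (n : ℕ) (p : ℝ) :
    ∑ A ∈ (Finset.Icc 1 n).powerset, (p ^ A.card * (1 - p) ^ (n - A.card)) * (1 / 2 : ℝ) ^ A.card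
      = (1 - p / 2) ^ n := by
  have := prob_gen n p (1 / 2) ∅ (Finset.Icc 1 n) (by simp) (by simp) (by simp)
  rw [Finset.card_empty, pow_zero, one_mul, Nat.card_Icc] at this
  rw [show (1 - p / 2 : ℝ) = 1 + (1 / 2 - 1) * p by ring]
  rw [Nat.add_sub_cancel] at this
  rw [← this]
  apply Finset.sum_congr rfl
  intro A hA
  rw [Finset.mem_powerset] at hA
  rw [if_pos (Finset.empty_subset _), Finset.inter_eq_left.2 hA]

theorem sum_small (n : ℕ) (p b L : ℝ) (hp : 0 ≤ p) (hL : 0 ≤ L) (F : Finset (Finset ℕ))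
    (hF : ∀ Z ∈ F, Z ⊆ Finset.Icc 1 n ∧ (Z.card : ℝ) ≤ b) :
    ∑ Z ∈ F, p ^ Z.card ≤ Real.exp (L * b + Real.exp (-L) * (p * n)) := by
  have h1 : ∀ Z ∈ F, p ^ Z.card ≤ Real.exp (L * b) * (Real.exp (-L) * p) ^ Z.card := by
    intro Z hZ
    rw [mul_pow, ← Real.exp_nat_mul, ← mul_assoc, ← Real.exp_add]
    apply le_mul_of_one_le_left (by positivity)
    apply Real.one_le_exp
    nlinarith [(hF Z hZ).2]
  calc ∑ Z ∈ F, p ^ Z.card ≤ ∑ Z ∈ F, Real.exp (L * b) * (Real.exp (-L) * p) ^ Z.card :=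
        Finset.sum_le_sum h1
    _ ≤ ∑ Z ∈ (Finset.Icc 1 n).powerset, Real.exp (L * b) * (Real.exp (-L) * p) ^ Z.card := by
        apply Finset.sum_le_sum_of_subset_of_nonneg
        · intro Z hZ; exact Finset.mem_powerset.2 (hF Z hZ).1
        · intros; positivity
    _ = Real.exp (L * b) * (1 + Real.exp (-L) * p) ^ n := by
        rw [← Finset.mul_sum]
        congr 1
        have := Finset.prod_one_add (f := fun _ : ℕ => Real.exp (-L) * p) (Finset.Icc 1 n)
        simpa using this.symm
    _ ≤ Real.exp (L * b) * (Real.exp (Real.exp (-L) * p)) ^ n := by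
        gcongr
        rw [add_comm]; exact Real.add_one_le_exp _
    _ = _ := by
        rw [← Real.exp_nat_mul, ← Real.exp_add]; congr 1; ring

theorem bad_point (n k : ℕ) (p δ b : ℝ) (hp : 0 ≤ p) (hδ : 0 < δ) (hδ1 : δ < 1)
    (R S : Finset ℕ → Finset ℕ) (hC : Cons R S) (hb : b ≤ δ / 4 * (p * n))
    (hI : ∀ I ⊆ Finset.Icc 1 n, APFree k I → I ⊆ R I ∪ S I ∧ ((R I).card : ℝ) ≤ δ / 8 * n ∧
      ((S I).card : ℝ) ≤ b) (F : Finset (Finset ℕ))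
    (hF : F = (Finset.Icc 1 n).powerset.filter fun Z => (Z.card : ℝ) ≤ b ∧
      ((R Z).card : ℝ) ≤ δ / 8 * n)
    (A : Finset ℕ) (hA : A ⊆ Finset.Icc 1 n) (hbad : ¬ IsSzemeredi δ k A) :
    1 ≤ Real.exp (Real.log 2 * (p * n / 2)) * (1 / 2) ^ A.card +
      ∑ Z ∈ F, Real.exp (- (Real.log 2 * (δ / 4 * (p * n)))) *
        (if Z ⊆ A then (2 : ℝ) ^ (A ∩ ((Finset.Icc 1 n ∩ R Z) \ Z)).card else 0) := by
  have hl2 : 0 < Real.log 2 := Real.log_pos (by norm_num)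
  have e2 : ∀ m : ℕ, (2 : ℝ) ^ m = Real.exp (Real.log 2 * m) := by
    intro m; rw [mul_comm, Real.exp_nat_mul, Real.exp_log (by norm_num)]
  have eh : ∀ m : ℕ, (1 / 2 : ℝ) ^ m = Real.exp (- (Real.log 2 * m)) := by
    intro m; rw [Real.exp_neg, ← e2, one_div, inv_pow]
  have hnn : ∀ Z ∈ F, 0 ≤ Real.exp (- (Real.log 2 * (δ / 4 * (p * n)))) *
        (if Z ⊆ A then (2 : ℝ) ^ (A ∩ ((Finset.Icc 1 n ∩ R Z) \ Z)).card else 0) := by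
    intro Z _; split_ifs <;> positivity
  by_cases hs : (A.card : ℝ) ≤ p * n / 2
  · have : 1 ≤ Real.exp (Real.log 2 * (p * n / 2)) * (1 / 2) ^ A.card := by
      rw [eh, ← Real.exp_add]
      apply Real.one_le_exp; nlinarith
    linarith [Finset.sum_nonneg hnn]
  · push Not at hs
    unfold IsSzemeredi at hbad
    push Not at hbad
    obtain ⟨B, hBA, hBc, hB⟩ := hbad
    have hfree : APFree k B := by
      rintro ⟨a, d, ha, hd, h⟩
      obtain ⟨i, hi, hi2⟩ := hB a d ha hd
      exact hi2 (h i hi)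
    obtain ⟨h1, h2, h3⟩ := hI B (hBA.trans hA) hfree
    obtain ⟨hSB, hcons⟩ := hC B
    obtain ⟨hR, -⟩ := hcons (S B) subset_rfl hSB
    have hZF : S B ∈ F := by
      rw [hF, Finset.mem_filter, Finset.mem_powerset, hR]
      exact ⟨hSB.trans (hBA.trans hA), h3, h2⟩
    have hle := Finset.single_le_sum hnn hZF
    have hsub : B ⊆ (A ∩ ((Finset.Icc 1 n ∩ R (S B)) \ S B)) ∪ S B := by
      intro i hi
      rw [hR]
      by_cases hiS : i ∈ S B
      · exact Finset.mem_union_right _ hiS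
      · have := (Finset.mem_union.1 (h1 hi)).resolve_right hiS
        apply Finset.mem_union_left
        simp only [Finset.mem_inter, Finset.mem_sdiff]
        exact ⟨hBA hi, ⟨hA (hBA hi), this⟩, hiS⟩
    have hc : (B.card : ℝ) ≤ (A ∩ ((Finset.Icc 1 n ∩ R (S B)) \ S B)).card + (S B).card := by
      exact_mod_cast (Finset.card_le_card hsub).trans (Finset.card_union_le _ _)
    have : 1 ≤ Real.exp (- (Real.log 2 * (δ / 4 * (p * n)))) *
        (if S B ⊆ A then (2 : ℝ) ^ (A ∩ ((Finset.Icc 1 n ∩ R (S B)) \ S B)).card else 0) := by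
      rw [if_pos (hSB.trans hBA), e2, ← Real.exp_add]
      apply Real.one_le_exp
      have : δ / 4 * (p * n) ≤ (A ∩ ((Finset.Icc 1 n ∩ R (S B)) \ S B)).card := by nlinarith
      nlinarith
    have h0 : 0 ≤ Real.exp (Real.log 2 * (p * n / 2)) * (1 / 2) ^ A.card := by positivity
    linarith

theorem bad_bound (n k : ℕ) (p δ b : ℝ) (hp : 0 ≤ p) (hp1 : p ≤ 1) (hδ : 0 < δ) (hδ1 : δ < 1)
    (R S : Finset ℕ → Finset ℕ) (hC : Cons R S) (hb : b ≤ δ ^ 2 / 10000 * (p * n))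
    (hI : ∀ I ⊆ Finset.Icc 1 n, APFree k I → I ⊆ R I ∪ S I ∧ ((R I).card : ℝ) ≤ δ / 8 * n ∧
      ((S I).card : ℝ) ≤ b) :
    1 - (Real.exp (-(1 / 10 * (p * n))) + Real.exp (-(δ / 100 * (p * n)))) ≤
      randomSubsetProb n p (IsSzemeredi δ k) := by
  have hl2 := Real.log_two_lt_d9
  have hl2' := Real.log_two_gt_d9
  have hm : 0 ≤ p * n := by positivity
  obtain ⟨F, hF⟩ : ∃ F : Finset (Finset ℕ), F = (Finset.Icc 1 n).powerset.filter
    fun Z => (Z.card : ℝ) ≤ b ∧ ((R Z).card : ℝ) ≤ δ / 8 * n := ⟨_, rfl⟩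
  have hb4 : b ≤ δ / 4 * (p * n) := by
    refine hb.trans (mul_le_mul_of_nonneg_right ?_ hm)
    nlinarith
  have hpt := bad_point n k p δ b hp hδ hδ1 R S hC hb4 hI F hF
  have hw : ∀ A : Finset ℕ, 0 ≤ p ^ A.card * (1 - p) ^ (n - A.card) := by
    intro A
    have : 0 ≤ 1 - p := by linarith
    positivity
  have key : 1 ≤ randomSubsetProb n p (IsSzemeredi δ k) +
      (Real.exp (Real.log 2 * (p * n / 2)) * (1 - p / 2) ^ n +
      ∑ Z ∈ F, Real.exp (- (Real.log 2 * (δ / 4 * (p * n)))) *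
        (p ^ Z.card * (1 + (2 - 1) * p) ^ ((Finset.Icc 1 n ∩ R Z) \ Z).card)) := by
    have hZ : ∀ Z ∈ F, p ^ Z.card * (1 + (2 - 1) * p) ^ ((Finset.Icc 1 n ∩ R Z) \ Z).card
        = ∑ A ∈ (Finset.Icc 1 n).powerset, (p ^ A.card * (1 - p) ^ (n - A.card)) *
      (if Z ⊆ A then (2 : ℝ) ^ (A ∩ ((Finset.Icc 1 n ∩ R Z) \ Z)).card else 0) := by
      intro Z hZ
      rw [hF, Finset.mem_filter, Finset.mem_powerset] at hZ
      rw [prob_gen n p 2 Z _ hZ.1 (Finset.sdiff_subset.trans Finset.inter_subset_left)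
        Finset.disjoint_sdiff]
    rw [Finset.sum_congr rfl (fun Z h => by rw [hZ Z h]), ← prob_half]
    simp only [Finset.mul_sum]
    rw [Finset.sum_comm]
    rw [← Finset.sum_add_distrib]
    unfold randomSubsetProb
    rw [← Finset.sum_add_distrib]
    refine (prob_total n p).symm.le.trans ?_
    apply Finset.sum_le_sum
    intro A hA
    rw [Finset.mem_powerset] at hA
    have hrest : Real.exp (Real.log 2 * (p * n / 2)) * (p ^ A.card * (1 - p) ^ (n - A.card) * (1 / 2) ^ A.card) +
      ∑ Z ∈ F, Real.exp (- (Real.log 2 * (δ / 4 * (p * n)))) * (p ^ A.card * (1 - p) ^ (n - A.card) *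
        (if Z ⊆ A then (2 : ℝ) ^ (A ∩ ((Finset.Icc 1 n ∩ R Z) \ Z)).card else 0))
       = p ^ A.card * (1 - p) ^ (n - A.card) * (Real.exp (Real.log 2 * (p * n / 2)) * (1 / 2) ^ A.card +
      ∑ Z ∈ F, Real.exp (- (Real.log 2 * (δ / 4 * (p * n)))) *
        (if Z ⊆ A then (2 : ℝ) ^ (A ∩ ((Finset.Icc 1 n ∩ R Z) \ Z)).card else 0)) := by
      rw [mul_add, Finset.mul_sum]
      congr 1
      · ring
      · apply Finset.sum_congr rfl; intro Z _; ring
    rw [hrest]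
    by_cases hg : IsSzemeredi δ k A
    · rw [if_pos hg]
      apply le_add_of_nonneg_right
      apply mul_nonneg (hw A)
      apply add_nonneg (by positivity)
      apply Finset.sum_nonneg
      intro Z _; split_ifs <;> positivity
    · rw [if_neg hg, zero_add]
      exact le_mul_of_one_le_right (hw A) (hpt A hA hg)
  have hx1 : Real.exp (Real.log 2 * (p * n / 2)) * (1 - p / 2) ^ n ≤
      Real.exp (-(1 / 10 * (p * n))) := by
    calc _ ≤ Real.exp (Real.log 2 * (p * n / 2)) * (Real.exp (-(p / 2))) ^ n := by
          gcongr
          · linarith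
          · linarith [Real.add_one_le_exp (-(p / 2))]
      _ = Real.exp (Real.log 2 * (p * n / 2) + n * (-(p / 2))) := by
          rw [← Real.exp_nat_mul, ← Real.exp_add]
      _ ≤ _ := by
          apply Real.exp_le_exp.2
          nlinarith
  have hx2 : ∑ Z ∈ F, Real.exp (- (Real.log 2 * (δ / 4 * (p * n)))) *
        (p ^ Z.card * (1 + (2 - 1) * p) ^ ((Finset.Icc 1 n ∩ R Z) \ Z).card)
        ≤ Real.exp (-(δ / 100 * (p * n))) := by
    have hone : ∀ Z ∈ F, Real.exp (- (Real.log 2 * (δ / 4 * (p * n)))) *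
        (p ^ Z.card * (1 + (2 - 1) * p) ^ ((Finset.Icc 1 n ∩ R Z) \ Z).card)
        ≤ Real.exp (- (Real.log 2 * (δ / 4 * (p * n))) + δ / 8 * (p * n)) * p ^ Z.card := by
      intro Z hZ
      rw [hF, Finset.mem_filter, Finset.mem_powerset] at hZ
      have hcard : ((((Finset.Icc 1 n ∩ R Z) \ Z).card : ℕ) : ℝ) ≤ δ / 8 * n := by
        refine le_trans ?_ hZ.2.2
        exact_mod_cast Finset.card_le_card (Finset.sdiff_subset.trans Finset.inter_subset_right)
      have : (1 + (2 - 1) * p) ^ ((Finset.Icc 1 n ∩ R Z) \ Z).card ≤ Real.exp (δ / 8 * (p * n)) := by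
        calc _ ≤ (Real.exp p) ^ ((Finset.Icc 1 n ∩ R Z) \ Z).card := by
              gcongr
              linarith [Real.add_one_le_exp p]
          _ = Real.exp ((((Finset.Icc 1 n ∩ R Z) \ Z).card : ℕ) * p) := by rw [Real.exp_nat_mul]
          _ ≤ _ := by
              apply Real.exp_le_exp.2
              nlinarith
      rw [Real.exp_add, mul_assoc (Real.exp _)]
      refine mul_le_mul_of_nonneg_left ?_ (Real.exp_pos _).le
      rw [mul_comm (Real.exp _)]
      exact mul_le_mul_of_nonneg_left this (by positivity)
    refine (Finset.sum_le_sum hone).trans ?_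
    rw [← Finset.mul_sum]
    have hLpos : 0 < 100 / δ := by positivity
    have hs := sum_small n p b (100 / δ) hp hLpos.le F (by
      intro Z hZ
      rw [hF, Finset.mem_filter, Finset.mem_powerset] at hZ
      exact ⟨hZ.1, hZ.2.1⟩)
    refine (mul_le_mul_of_nonneg_left hs (Real.exp_pos _).le).trans ?_
    rw [← Real.exp_add]
    apply Real.exp_le_exp.2
    have hexp : Real.exp (-(100 / δ)) ≤ δ / 100 := by
      rw [Real.exp_neg]
      rw [show δ / 100 = (100 / δ)⁻¹ by rw [inv_div]]
      apply inv_anti₀ hLpos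
      linarith [Real.add_one_le_exp (100 / δ)]
    have hLb : 100 / δ * b ≤ δ / 100 * (p * n) := by
      calc 100 / δ * b ≤ 100 / δ * (δ ^ 2 / 10000 * (p * n)) := by gcongr
        _ = _ := by field_simp; ring
    have h3 : Real.exp (-(100 / δ)) * (p * n) ≤ δ / 100 * (p * n) := by gcongr
    have hq : 0 ≤ δ * (p * n) := by positivity
    nlinarith
  linarith

theorem prob_le_one (n : ℕ) (p : ℝ) (hp : 0 ≤ p) (hp1 : p ≤ 1) (P : Finset ℕ → Prop) :
    randomSubsetProb n p P ≤ 1 := by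
  rw [← prob_total n p]
  unfold randomSubsetProb
  apply Finset.sum_le_sum
  intro A _
  have : 0 ≤ 1 - p := by linarith
  split_ifs
  · exact le_rfl
  · positivity

end SzRandom

/-- Corollary 1.2: the sparse random analogue of Szemerédi's theorem. -/
theorem szemeredi_random_sparse (δ : ℝ) (hδ0 : 0 < δ) (hδ1 : δ < 1) (k : ℕ) (hk : 3 ≤ k) :
    ∃ C : ℝ, ∀ p : ℕ → ℝ, (∀ n, p n ∈ Set.Icc (0 : ℝ) 1) →
      (∀ᶠ n : ℕ in Filter.atTop, C * (n : ℝ) ^ (-(1 : ℝ) / ((k : ℝ) - 1)) ≤ p n) →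
      Filter.Tendsto (fun n => randomSubsetProb n (p n) (IsSzemeredi δ k))
        Filter.atTop (nhds 1) := by
  obtain ⟨K, rfl⟩ : ∃ K, k = K + 1 := ⟨k - 1, by omega⟩
  have hK : 2 ≤ K := by omega
  have hKr : (2 : ℝ) ≤ K := by exact_mod_cast hK
  obtain ⟨M, n0, hM, hcont⟩ := SzRandom.containers K (by omega) (δ / 8) (by positivity)
  refine ⟨M / (δ ^ 2 / 10000), fun p hp hlow => ?_⟩
  have hCpos : 0 < M / (δ ^ 2 / 10000) := by positivity
  have he : -(1 : ℝ) / (((K + 1 : ℕ) : ℝ) - 1) = -(1 / (K : ℝ)) := by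
    push_cast; rw [add_sub_cancel_right, neg_div]
  rw [he] at hlow
  have hmt : Filter.Tendsto (fun n : ℕ => p n * n) Filter.atTop Filter.atTop := by
    have h1 : Filter.Tendsto (fun n : ℕ => M / (δ ^ 2 / 10000) * (n : ℝ) ^ (1 - 1 / (K : ℝ)))
        Filter.atTop Filter.atTop := by
      apply Filter.Tendsto.const_mul_atTop hCpos
      refine (tendsto_rpow_atTop ?_).comp tendsto_natCast_atTop_atTop
      have : 1 / (K : ℝ) ≤ 1 / 2 := by gcongr
      linarith
    refine Filter.tendsto_atTop_mono' _ ?_ h1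
    filter_upwards [hlow, Filter.eventually_ge_atTop 1] with n hn hn1
    have hn0 : (0 : ℝ) < n := by exact_mod_cast hn1
    calc _ = (M / (δ ^ 2 / 10000) * (n : ℝ) ^ (-(1 / (K : ℝ)))) * n := by
          rw [sub_eq_neg_add, Real.rpow_add hn0, Real.rpow_one]; ring
      _ ≤ _ := by gcongr
  have hexp : ∀ c : ℝ, 0 < c →
      Filter.Tendsto (fun n : ℕ => Real.exp (-(c * (p n * n)))) Filter.atTop (nhds 0) := by
    intro c hc
    exact Real.tendsto_exp_neg_atTop_nhds_zero.comp (hmt.const_mul_atTop hc)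
  have hlim : Filter.Tendsto (fun n : ℕ => 1 - (Real.exp (-(1 / 10 * (p n * n))) +
      Real.exp (-(δ / 100 * (p n * n))))) Filter.atTop (nhds 1) := by
    have := ((hexp (1 / 10) (by norm_num)).add (hexp (δ / 100) (by positivity))).const_sub 1
    simpa using this
  refine tendsto_of_tendsto_of_tendsto_of_le_of_le' hlim tendsto_const_nhds ?_
    (Filter.Eventually.of_forall fun n => SzRandom.prob_le_one n (p n) (hp n).1 (hp n).2 _)
  filter_upwards [hlow, Filter.eventually_ge_atTop 1, Filter.eventually_ge_atTop n0]
    with n hn hn1 hnn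
  have hn0 : (0 : ℝ) < n := by exact_mod_cast hn1
  obtain ⟨R, S, hRS, hI⟩ := hcont n hnn ((n : ℝ) ^ (-(1 / (K : ℝ)))) (by positivity)
    (Real.rpow_le_one_of_one_le_of_nonpos (by exact_mod_cast hn1) (by
      rw [neg_nonpos]; positivity))
    (by
      rw [← Real.rpow_natCast, ← Real.rpow_mul hn0.le]
      rw [show -(1 / (K : ℝ)) * K = -1 by field_simp, Real.rpow_neg_one]
      field_simp)
  refine SzRandom.bad_bound n (K + 1) (p n) δ _ (hp n).1 (hp n).2 hδ0 hδ1 R S hRS ?_ hI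
  have : M * (n : ℝ) ^ (-(1 / (K : ℝ))) ≤ δ ^ 2 / 10000 * p n := by
    have h := mul_le_mul_of_nonneg_left hn (show 0 ≤ δ ^ 2 / 10000 by positivity)
    rw [← mul_assoc, mul_div_cancel₀ _ (by positivity)] at h
    exact h
  calc _ = (M * (n : ℝ) ^ (-(1 / (K : ℝ)))) * n := by ring
    _ ≤ (δ ^ 2 / 10000 * p n) * n := by gcongr
    _ = _ := by ring
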